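/- arXiv:2112.14803 — 3 statements merged into one kernel-verified Lean document; each statement's English description precedes it below -/
import Mathlib

section
/- Let q ≥ 8 be an even prime power. The UΓ-lines of the twisted cubic C form exactly two orbits under G_q, of sizes q + 1 and q² − 1: the orbit of size q + 1 is the orbit of the line ℓ1 through (0:0:0:1) and (0:1:0:0), and the orbit of size q² − 1 is the orbit of the line ℓ2 through (0:0:0:1) and (0:1:1:0). The stabilizer in G_q of ℓ1 has order q(q−1) and consists exactly of the projectivities induced by the matrices with rows (1,c,c²,c³), (0,d,0,c²d), (0,0,d²,cd²), (0,0,0,d³) with c ∈ F_q, d ∈ F_q^*; the stabilizer in G_q of ℓ2 has order q and consists exactly of the projectivities induced by the matrices with rows (1,c,c²,c³), (0,1,0,c²), (0,0,1,c), (0,0,0,1) with c ∈ F_q. -/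
open Matrix Submodule

noncomputable section

/-- Row-vector action of an invertible matrix on subspaces of `F^4`:
a projectivity of `PG(3,q)` induced by the matrix. -/
def projAct (F : Type) [Field F] (A : GL (Fin 4) F) :
    Submodule F (Fin 4 → F) → Submodule F (Fin 4 → F) :=
  fun W => W.map (Matrix.vecMulLinear (A : Matrix (Fin 4) (Fin 4) F))

/-- Representative vectors of the points of the twisted cubic. -/
def cubicVecs (F : Type) [Field F] : Set (Fin 4 → F) :=
  {v | (∃ t : F, v = ![t ^ 3, t ^ 2, t, 1]) ∨ v = ![1, 0, 0, 0]}

/-- The twisted cubic, as a set of projective points (1-dimensional subspaces). -/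
def twistedCubic (F : Type) [Field F] : Set (Submodule F (Fin 4 → F)) :=
  (fun v => Submodule.span F {v}) '' cubicVecs F

/-- The group `G_q` of projectivities fixing the twisted cubic, modeled as those maps
on subspaces that are induced by an invertible matrix and map the cubic onto itself. -/
def Gq (F : Type) [Field F] :
    Set ((Submodule F (Fin 4 → F)) → (Submodule F (Fin 4 → F))) :=
  {f | (∃ A : GL (Fin 4) F, f = projAct F A) ∧ f '' twistedCubic F = twistedCubic F}

def isPoint (F : Type) [Field F] (W : Submodule F (Fin 4 → F)) : Prop :=
  Module.finrank F W = 1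

def isLine (F : Type) [Field F] (W : Submodule F (Fin 4 → F)) : Prop :=
  Module.finrank F W = 2

/-- The orbit of a line under `G_q`. -/
def lineOrbit (F : Type) [Field F] (ℓ : Submodule F (Fin 4 → F)) :
    Set (Submodule F (Fin 4 → F)) :=
  {m | ∃ f ∈ Gq F, f ℓ = m}

/-- The stabilizer of a line in `G_q`. -/
def lineStab (F : Type) [Field F] (ℓ : Submodule F (Fin 4 → F)) :
    Set ((Submodule F (Fin 4 → F)) → (Submodule F (Fin 4 → F))) :=
  {f ∈ Gq F | f ℓ = ℓ}

/-- The linear form `y ↦ c0 y0 + c1 y1 + c2 y2 + c3 y3` defining a plane. -/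
def planeForm (F : Type) [Field F] (c : Fin 4 → F) : (Fin 4 → F) →ₗ[F] F where
  toFun y := c 0 * y 0 + c 1 * y 1 + c 2 * y 2 + c 3 * y 3
  map_add' a b := by simp only [Pi.add_apply]; ring
  map_smul' r a := by simp only [Pi.smul_apply, smul_eq_mul, RingHom.id_apply]; ring

/-- The plane `π(c0,c1,c2,c3)`. -/
def planeOf (F : Type) [Field F] (c : Fin 4 → F) : Submodule F (Fin 4 → F) :=
  LinearMap.ker (planeForm F c)

/-- The null polarity `𝔄`: the polar subspace of `W` w.r.t. the bilinear form
sending a point `(x0:x1:x2:x3)` to the plane `π(x3, −3x2, 3x1, −x0)`. -/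
def nullPolarity (F : Type) [Field F] (W : Submodule F (Fin 4 → F)) :
    Submodule F (Fin 4 → F) :=
  ⨅ x ∈ (W : Set (Fin 4 → F)), planeOf F ![x 3, -(3 * x 2), 3 * x 1, -(x 0)]

/-- The tangent line to the twisted cubic at `P(t)`, `t ∈ F`. -/
def tangentAt (F : Type) [Field F] (t : F) : Submodule F (Fin 4 → F) :=
  Submodule.span F {![t ^ 3, t ^ 2, t, 1], ![3 * t ^ 2, 2 * t, 1, 0]}

/-- The tangent line to the twisted cubic at `P(∞)`. -/
def tangentAtInf (F : Type) [Field F] : Submodule F (Fin 4 → F) :=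
  Submodule.span F {![1, 0, 0, 0], ![0, 1, 0, 0]}

def isTangent (F : Type) [Field F] (ℓ : Submodule F (Fin 4 → F)) : Prop :=
  (∃ t : F, ℓ = tangentAt F t) ∨ ℓ = tangentAtInf F

/-- The osculating plane at `P(t)`, `t ∈ F`. -/
def oscPlane (F : Type) [Field F] (t : F) : Submodule F (Fin 4 → F) :=
  planeOf F ![1, -(3 * t), 3 * t ^ 2, -(t ^ 3)]

/-- The osculating plane at `P(∞)`. -/
def oscPlaneInf (F : Type) [Field F] : Submodule F (Fin 4 → F) :=
  planeOf F ![0, 0, 0, 1]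

def isOscPlane (F : Type) [Field F] (π : Submodule F (Fin 4 → F)) : Prop :=
  (∃ t : F, π = oscPlane F t) ∨ π = oscPlaneInf F

/-- A real chord: the line joining two distinct points of the twisted cubic. -/
def isRealChord (F : Type) [Field F] (ℓ : Submodule F (Fin 4 → F)) : Prop :=
  ∃ u ∈ cubicVecs F, ∃ v ∈ cubicVecs F,
    Submodule.span F {u} ≠ Submodule.span F {v} ∧ ℓ = Submodule.span F {u, v}

/-- A real axis: the intersection of two distinct osculating planes. -/
def isRealAxis (F : Type) [Field F] (ℓ : Submodule F (Fin 4 → F)) : Prop :=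
  ∃ π₁ π₂ : Submodule F (Fin 4 → F),
    isOscPlane F π₁ ∧ isOscPlane F π₂ ∧ π₁ ≠ π₂ ∧ ℓ = π₁ ⊓ π₂

/-- The `F_{q²}`-extension of a subspace of `F^4`. -/
def extendSub (F K : Type) [Field F] [Field K] [Algebra F K]
    (W : Submodule F (Fin 4 → F)) : Submodule K (Fin 4 → K) :=
  Submodule.span K ((fun v i => algebraMap F K (v i)) '' (W : Set (Fin 4 → F)))

/-- An external line: a line containing no point of the twisted cubic. -/
def isExternal (F : Type) [Field F] (ℓ : Submodule F (Fin 4 → F)) : Prop :=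
  isLine F ℓ ∧ ∀ P ∈ twistedCubic F, ¬ P ≤ ℓ

/-- An imaginary chord: a line disjoint from the cubic whose `F_{q²}`-extension joins a
pair of Frobenius-conjugate points `P(t)`, `P(t^q)` of the cubic over `F_{q²}`. -/
def isImagChord (F K : Type) [Field F] [Field K] [Algebra F K] (q : ℕ)
    (ℓ : Submodule F (Fin 4 → F)) : Prop :=
  isExternal F ℓ ∧
  ∃ t : K, t ∉ Set.range (algebraMap F K) ∧
    extendSub F K ℓ =
      Submodule.span K
        ({![t ^ 3, t ^ 2, t, 1], ![(t ^ q) ^ 3, (t ^ q) ^ 2, t ^ q, 1]} :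
          Set (Fin 4 → K))

/-- An imaginary axis: a line whose `F_{q²}`-extension is the intersection of a pair of
Frobenius-conjugate osculating planes `π_osc(t)`, `π_osc(t^q)` over `F_{q²}`. -/
def isImagAxis (F K : Type) [Field F] [Field K] [Algebra F K] (q : ℕ)
    (ℓ : Submodule F (Fin 4 → F)) : Prop :=
  isLine F ℓ ∧
  ∃ t : K, t ∉ Set.range (algebraMap F K) ∧
    extendSub F K ℓ =
      planeOf K ![1, -(3 * t), 3 * t ^ 2, -(t ^ 3)] ⊓
        planeOf K ![1, -(3 * t ^ q), 3 * (t ^ q) ^ 2, -((t ^ q) ^ 3)]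

/-- A unisecant: a line meeting the twisted cubic in exactly one point. -/
def isUnisecant (F : Type) [Field F] (ℓ : Submodule F (Fin 4 → F)) : Prop :=
  isLine F ℓ ∧ ∃! P, P ∈ twistedCubic F ∧ P ≤ ℓ

/-- A `UΓ`-line: a non-tangent unisecant lying in some osculating plane. -/
def isUGamma (F : Type) [Field F] (ℓ : Submodule F (Fin 4 → F)) : Prop :=
  isUnisecant F ℓ ∧ ¬ isTangent F ℓ ∧ ∃ π, isOscPlane F π ∧ ℓ ≤ π

/-- A `UnΓ`-line: a non-tangent unisecant lying in no osculating plane. -/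
def isUnGamma (F : Type) [Field F] (ℓ : Submodule F (Fin 4 → F)) : Prop :=
  isUnisecant F ℓ ∧ ¬ isTangent F ℓ ∧ ∀ π, isOscPlane F π → ¬ ℓ ≤ π

/-- An `EΓ`-line: an external line, other than an imaginary chord, lying in some
osculating plane. -/
def isEGamma (F K : Type) [Field F] [Field K] [Algebra F K] (q : ℕ)
    (ℓ : Submodule F (Fin 4 → F)) : Prop :=
  isExternal F ℓ ∧ ¬ isImagChord F K q ℓ ∧ ∃ π, isOscPlane F π ∧ ℓ ≤ π

/-- For `q ≡ 0 (mod 3)`: the axis of `Γ`, the line `x0 = x3 = 0`. -/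
def axisLine (F : Type) [Field F] : Submodule F (Fin 4 → F) :=
  Submodule.span F {![0, 1, 0, 0], ![0, 0, 1, 0]}

/-- For `q ≡ 0 (mod 3)`: an `EA`-line, i.e. an external line, other than an imaginary
chord and other than the axis of `Γ`, meeting the axis of `Γ`. -/
def isEA (F K : Type) [Field F] [Field K] [Algebra F K] (q : ℕ)
    (ℓ : Submodule F (Fin 4 → F)) : Prop :=
  isExternal F ℓ ∧ ¬ isImagChord F K q ℓ ∧ ℓ ≠ axisLine F ∧ ℓ ⊓ axisLine F ≠ ⊥

end

/-!
`GL₂(F)` acts on the twisted cubic through its symmetric cube, and once `F` has more than four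
elements every projectivity preserving the cubic arises in this way: after composing with an
element of `GL₂(F)` it fixes `P(0)` and `P(∞)`, and comparing coefficients in the quadrics through
the cubic shows that it is diagonal.

A `UΓ`-line passes through the point of contact of its osculating plane, and the osculating flags
(point, tangent, plane) form a single orbit, so it suffices to study the flag at `P(0)`. The
`UΓ`-lines belonging to it join `P(0)` to `(0 : 1 : m : 0)`, and modulo scalars its stabilizer
consists of the matrices `(1 c; 0 d)`, which act by `m ↦ 2c + md`. In characteristic two this is
`m ↦ md`, with the orbits `{0}` and `F \ {0}` on the slopes `m`.
-/

namespace TwistedCubic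

section Cardinality

lemma card_option (α : Type*) : ENat.card (Option α) = ENat.card α + 1 := by
  rw [ENat.card_congr (Equiv.optionEquivSumPUnit.{0} α), ENat.card_sum]
  simp

lemma card_units_add_one (G : Type*) [GroupWithZero G] : ENat.card Gˣ + 1 = ENat.card G := by
  classical
  rw [← card_option]
  exact ENat.card_congr (WithZero.withZeroUnitsEquiv (G := G)).toEquiv

lemma card_units (G : Type*) [GroupWithZero G] : ENat.card Gˣ = ENat.card G - 1 := by
  rw [← card_units_add_one G,
    (ENat.addLECancellable_of_ne_top ENat.one_ne_top).add_tsub_cancel_right]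

lemma encard_range_of_injective {α β : Type*} {f : α → β} (hf : Function.Injective f) :
    (Set.range f).encard = ENat.card α := by
  rw [← Set.image_univ, hf.encard_image, Set.encard_univ]

end Cardinality

variable {F : Type} [Field F]

section Projectivities

lemma projAct_span (A : GL (Fin 4) F) (s : Set (Fin 4 → F)) :
    projAct F A (span F s) = span F ((· ᵥ* (A : Matrix (Fin 4) (Fin 4) F)) '' s) :=
  map_span _ s

lemma projAct_one : projAct F 1 = id := by
  funext W
  have : vecMulLinear (1 : Matrix (Fin 4) (Fin 4) F) = LinearMap.id :=
    LinearMap.ext vecMul_one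
  simp [projAct, this]

lemma projAct_mul (A B : GL (Fin 4) F) : projAct F (A * B) = projAct F B ∘ projAct F A := by
  funext W
  simp only [projAct, Function.comp_apply, ← map_comp]
  congr 1
  exact LinearMap.ext fun v => (vecMul_vecMul v _ _).symm

lemma vecMulLinear_injective (A : GL (Fin 4) F) :
    Function.Injective (vecMulLinear (A : Matrix (Fin 4) (Fin 4) F)) :=
  vecMul_injective_of_isUnit A.isUnit

lemma projAct_injective (A : GL (Fin 4) F) : Function.Injective (projAct F A) :=
  map_injective_of_injective (vecMulLinear_injective A)

lemma projAct_le_projAct_iff (A : GL (Fin 4) F) {V W : Submodule F (Fin 4 → F)} :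
    projAct F A V ≤ projAct F A W ↔ V ≤ W :=
  map_le_map_iff_of_injective (vecMulLinear_injective A) V W

lemma isLine_projAct_iff (A : GL (Fin 4) F) {W : Submodule F (Fin 4 → F)} :
    isLine F (projAct F A W) ↔ isLine F W := by
  rw [isLine, isLine, projAct,
    (equivMapOfInjective _ (vecMulLinear_injective A) W).finrank_eq]

lemma mem_projAct_iff (A : GL (Fin 4) F) {W : Submodule F (Fin 4 → F)} {v : Fin 4 → F} :
    v ∈ projAct F A W ↔ v ᵥ* (↑A⁻¹ : Matrix (Fin 4) (Fin 4) F) ∈ W := by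
  constructor
  · rintro ⟨w, hw, rfl⟩
    simpa [vecMul_vecMul] using hw
  · intro hv
    exact ⟨_, hv, by simp [vecMul_vecMul]⟩

lemma projAct_eq_of_coe_eq_smul {A B : GL (Fin 4) F} {a : F} (ha : a ≠ 0)
    (h : (A : Matrix (Fin 4) (Fin 4) F) = a • (B : Matrix (Fin 4) (Fin 4) F)) :
    projAct F A = projAct F B := by
  funext W
  rw [projAct, projAct, h, ← Submodule.map_smul (B : Matrix (Fin 4) (Fin 4) F).vecMulLinear W a ha]
  congr 1
  exact LinearMap.ext fun v => vecMul_smul v a (B : Matrix (Fin 4) (Fin 4) F)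

end Projectivities

section Lines

lemma isLine_span_pair {u v : Fin 4 → F} (h : LinearIndependent F ![u, v]) :
    isLine F (span F {u, v}) := by
  have := finrank_span_eq_card h
  rwa [range_cons, range_cons, range_empty, Set.union_empty, Set.singleton_union,
    Fintype.card_fin] at this

lemma eq_of_le_of_isLine {ℓ m : Submodule F (Fin 4 → F)} (hℓ : isLine F ℓ) (hm : isLine F m)
    (h : ℓ ≤ m) : ℓ = m :=
  eq_of_le_of_finrank_eq h (hℓ.trans hm.symm)

lemma exists_mem_notMem_span_singleton {ℓ : Submodule F (Fin 4 → F)} (hℓ : isLine F ℓ)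
    (u : Fin 4 → F) : ∃ v ∈ ℓ, v ∉ span F {u} := by
  by_contra! hle
  have h2 : Module.finrank F ℓ = 2 := hℓ
  have h1 := (finrank_mono (show ℓ ≤ span F {u} from hle)).trans (finrank_span_le_card {u})
  simp [h2] at h1

end Lines

section SymmetricCube

/-- The Veronese parametrisation `(x, y) ↦ (x³, x²y, xy², y³)` of the cone over the twisted
cubic; `P(t)` is the image of `(t, 1)` and `P(∞)` that of `(1, 0)`. -/
def veronese {R : Type*} [CommRing R] (v : Fin 2 → R) : Fin 4 → R :=
  ![v 0 ^ 3, v 0 ^ 2 * v 1, v 0 * v 1 ^ 2, v 1 ^ 3]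

/-- The symmetric cube of a `2 × 2` matrix, acting on row vectors: the representation through
which `GL₂` acts on the twisted cubic. -/
def symCube {R : Type*} [CommRing R] : Matrix (Fin 2) (Fin 2) R →* Matrix (Fin 4) (Fin 4) R where
  toFun g :=
    let a := g 0 0
    let b := g 0 1
    let c := g 1 0
    let d := g 1 1
    !![a ^ 3, a ^ 2 * b, a * b ^ 2, b ^ 3;
       3 * a ^ 2 * c, a ^ 2 * d + 2 * a * b * c, 2 * a * b * d + b ^ 2 * c, 3 * b ^ 2 * d;
       3 * a * c ^ 2, 2 * a * c * d + b * c ^ 2, a * d ^ 2 + 2 * b * c * d, 3 * b * d ^ 2;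
       c ^ 3, c ^ 2 * d, c * d ^ 2, d ^ 3]
  map_one' := by
    ext i j; fin_cases i <;> fin_cases j <;> simp
  map_mul' g h := by
    ext i j
    fin_cases i <;> fin_cases j <;> simp [mul_apply, Fin.sum_univ_succ] <;> ring

variable {R : Type*} [CommRing R]

lemma veronese_vecMul_symCube (v : Fin 2 → R) (g : Matrix (Fin 2) (Fin 2) R) :
    veronese v ᵥ* symCube g = veronese (v ᵥ* g) := by
  ext i
  fin_cases i <;> simp [veronese, symCube, vecMul, dotProduct, Fin.sum_univ_succ] <;> ring

lemma veronese_smul (a : R) (v : Fin 2 → R) : veronese (a • v) = a ^ 3 • veronese v := by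
  ext i
  fin_cases i <;> simp [veronese] <;> ring

lemma symCube_smul (a : R) (g : Matrix (Fin 2) (Fin 2) R) :
    symCube (a • g) = a ^ 3 • symCube g := by
  ext i j
  fin_cases i <;> fin_cases j <;> simp [symCube] <;> ring

end SymmetricCube

section CubicAction

/-- The projectivity of `PG(3, F)` induced on the twisted cubic by `g : GL₂(F)`. Since matrices
act on row vectors, `g ↦ cubicAct g` reverses products. -/
def cubicAct (g : GL (Fin 2) F) : Submodule F (Fin 4 → F) → Submodule F (Fin 4 → F) :=
  projAct F (Units.map symCube g)

lemma cubicAct_one : cubicAct (1 : GL (Fin 2) F) = id := by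
  rw [cubicAct, map_one, projAct_one]

lemma cubicAct_mul (g h : GL (Fin 2) F) : cubicAct (g * h) = cubicAct h ∘ cubicAct g := by
  rw [cubicAct, map_mul, projAct_mul]; rfl

lemma cubicAct_inv_cubicAct (g : GL (Fin 2) F) (W : Submodule F (Fin 4 → F)) :
    cubicAct g⁻¹ (cubicAct g W) = W := by
  rw [← Function.comp_apply (f := cubicAct g⁻¹), ← cubicAct_mul, mul_inv_cancel, cubicAct_one, id]

lemma cubicAct_cubicAct_inv (g : GL (Fin 2) F) (W : Submodule F (Fin 4 → F)) :
    cubicAct g (cubicAct g⁻¹ W) = W := by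
  simpa using cubicAct_inv_cubicAct g⁻¹ W

lemma cubicAct_span_singleton_veronese (g : GL (Fin 2) F) (v : Fin 2 → F) :
    cubicAct g (span F {veronese v}) =
      span F {veronese (v ᵥ* (g : Matrix (Fin 2) (Fin 2) F))} := by
  rw [cubicAct, projAct_span, Set.image_singleton, Units.coe_map]
  exact congrArg (span F {·}) (veronese_vecMul_symCube v _)

lemma cubicAct_eq_of_coe_eq_smul {g h : GL (Fin 2) F} {a : F} (ha : a ≠ 0)
    (hgh : (g : Matrix (Fin 2) (Fin 2) F) = a • (h : Matrix (Fin 2) (Fin 2) F)) :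
    cubicAct g = cubicAct h :=
  projAct_eq_of_coe_eq_smul (pow_ne_zero 3 ha) <| by
    simp only [Units.coe_map, hgh, symCube_smul]

lemma span_veronese_smul {a : F} (ha : a ≠ 0) (v : Fin 2 → F) :
    span F {veronese (a • v)} = span F {veronese v} := by
  rw [veronese_smul, span_singleton_smul_eq (IsUnit.mk0 _ (pow_ne_zero 3 ha))]

lemma mem_twistedCubic_iff {P : Submodule F (Fin 4 → F)} :
    P ∈ twistedCubic F ↔ ∃ v : Fin 2 → F, v ≠ 0 ∧ P = span F {veronese v} := by
  constructor
  · rintro ⟨_, ⟨t, rfl⟩ | rfl, rfl⟩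
    · exact ⟨![t, 1], by simp, by simp [veronese]⟩
    · exact ⟨![1, 0], by simp, by simp [veronese]⟩
  · rintro ⟨v, hv, rfl⟩
    by_cases h1 : v 1 = 0
    · have h0 : v 0 ≠ 0 := fun h0 => hv (by ext i; fin_cases i <;> assumption)
      refine ⟨_, Or.inr rfl, ?_⟩
      rw [show v = v 0 • ![1, 0] by ext i; fin_cases i <;> simp [h1], span_veronese_smul h0]
      simp [veronese]
    · refine ⟨_, Or.inl ⟨v 0 / v 1, rfl⟩, ?_⟩
      rw [show v = v 1 • ![v 0 / v 1, 1] by ext i; fin_cases i <;> simp [mul_div_cancel₀ _ h1],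
        span_veronese_smul h1]
      simp [veronese, h1]

lemma cubicAct_mem_twistedCubic (g : GL (Fin 2) F) {P : Submodule F (Fin 4 → F)}
    (hP : P ∈ twistedCubic F) : cubicAct g P ∈ twistedCubic F := by
  obtain ⟨v, hv, rfl⟩ := mem_twistedCubic_iff.1 hP
  refine mem_twistedCubic_iff.2 ⟨_, fun h => hv ?_, cubicAct_span_singleton_veronese g v⟩
  exact vecMul_injective_of_isUnit g.isUnit (h.trans (zero_vecMul _).symm)

lemma cubicAct_mem_Gq (g : GL (Fin 2) F) : cubicAct g ∈ Gq F := by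
  refine ⟨⟨_, rfl⟩, Set.Subset.antisymm ?_ fun P hP => ?_⟩
  · rintro _ ⟨P, hP, rfl⟩
    exact cubicAct_mem_twistedCubic g hP
  · exact ⟨_, cubicAct_mem_twistedCubic g⁻¹ hP, cubicAct_cubicAct_inv g P⟩

lemma cubicAct_comp_mem_Gq (g : GL (Fin 2) F)
    {f : Submodule F (Fin 4 → F) → Submodule F (Fin 4 → F)} (hf : f ∈ Gq F) :
    cubicAct g ∘ f ∈ Gq F := by
  obtain ⟨⟨A, rfl⟩, hA⟩ := hf
  exact ⟨⟨_, (projAct_mul A _).symm⟩, by rw [Set.image_comp, hA, (cubicAct_mem_Gq g).2]⟩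

end CubicAction

section Decomposition

/-- Representatives modulo scalars of the stabilizer of the parameter `0` of the projective line:
the matrices `(1 c; 0 d)`, sending `t` to `t / (c t + d)`. -/
def upperTri (c : F) (d : Fˣ) : GL (Fin 2) F where
  val := !![1, c; 0, d]
  inv := !![1, -c * ↑d⁻¹; 0, ↑d⁻¹]
  val_inv := by simp [one_fin_two]
  inv_val := by simp [one_fin_two]

/-- A matrix sending the parameter `0` of the projective line to the given one, where `none`
stands for `∞`. -/
def cosetRep : Option F → GL (Fin 2) F
  | none => ⟨!![0, 1; 1, 0], !![0, 1; 1, 0], by simp [one_fin_two], by simp [one_fin_two]⟩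
  | some t => ⟨!![1, 0; t, 1], !![1, 0; -t, 1], by simp [one_fin_two], by simp [one_fin_two]⟩

lemma cosetRep_some_zero : cosetRep (some (0 : F)) = 1 := by
  ext i j; fin_cases i <;> fin_cases j <;> simp [cosetRep]

lemma exists_coe_eq_smul_upperTri_mul_cosetRep (g : GL (Fin 2) F) :
    ∃ (a c : F) (d : Fˣ) (o : Option F), a ≠ 0 ∧ (g : Matrix (Fin 2) (Fin 2) F) =
      a • (↑(upperTri c d * cosetRep o) : Matrix (Fin 2) (Fin 2) F) := by
  have hdet : g 0 0 * g 1 1 - g 0 1 * g 1 0 ≠ 0 := by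
    simpa [det_fin_two] using (isUnits_det_units g).ne_zero
  by_cases h11 : g 1 1 = 0
  · simp only [h11, mul_zero, zero_sub, neg_ne_zero, mul_ne_zero_iff] at hdet
    obtain ⟨h01, h10⟩ := hdet
    refine ⟨g 0 1, g 0 0 / g 0 1, .mk0 (g 1 0 / g 0 1) (div_ne_zero h10 h01), none, h01, ?_⟩
    ext i j
    fin_cases i <;> fin_cases j <;> simp [upperTri, cosetRep, h11] <;> field_simp
  · let a := (g 0 0 * g 1 1 - g 0 1 * g 1 0) / g 1 1
    have ha : a ≠ 0 := div_ne_zero hdet h11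
    refine ⟨a, g 0 1 / a, .mk0 (g 1 1 / a) (div_ne_zero h11 ha), some (g 1 0 / g 1 1), ha, ?_⟩
    ext i j
    fin_cases i <;> fin_cases j <;> simp [upperTri, cosetRep, mul_add] <;> field_simp
    simp only [a]
    field_simp
    ring

lemma exists_cubicAct_eq_upperTri_mul_cosetRep (g : GL (Fin 2) F) :
    ∃ (c : F) (d : Fˣ) (o : Option F),
      cubicAct g = cubicAct (cosetRep o) ∘ cubicAct (upperTri c d) := by
  obtain ⟨a, c, d, o, ha, hg⟩ := exists_coe_eq_smul_upperTri_mul_cosetRep g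
  exact ⟨c, d, o, (cubicAct_eq_of_coe_eq_smul ha hg).trans (cubicAct_mul _ _)⟩

lemma exists_eq_cubicAct_iff {V W : Submodule F (Fin 4 → F)}
    (hW : ∀ (c : F) (d : Fˣ), cubicAct (upperTri c d) W = W) :
    (∃ g, V = cubicAct g W) ↔ ∃ o, V = cubicAct (cosetRep o) W := by
  refine ⟨?_, fun ⟨o, h⟩ => ⟨_, h⟩⟩
  rintro ⟨g, rfl⟩
  obtain ⟨c, d, o, hg⟩ := exists_cubicAct_eq_upperTri_mul_cosetRep g
  exact ⟨o, by rw [hg, Function.comp_apply, hW]⟩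

end Decomposition

section Stabilizer

lemma exists_cubicAct_eq_and_eq {P Q : Submodule F (Fin 4 → F)} (hP : P ∈ twistedCubic F)
    (hQ : Q ∈ twistedCubic F) (hPQ : P ≠ Q) :
    ∃ g : GL (Fin 2) F, cubicAct g (span F {veronese ![1, 0]}) = P ∧
      cubicAct g (span F {veronese ![0, 1]}) = Q := by
  obtain ⟨u, hu, rfl⟩ := mem_twistedCubic_iff.1 hP
  obtain ⟨v, hv, rfl⟩ := mem_twistedCubic_iff.1 hQ
  have hind : LinearIndependent F (of ![u, v]).row := by
    refine (LinearIndependent.pair_iff' hu).2 fun a hav => hPQ ?_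
    rw [← hav, span_veronese_smul]
    rintro rfl
    exact hv (by rw [← hav, zero_smul])
  obtain ⟨g, hg⟩ := linearIndependent_rows_iff_isUnit.1 hind
  refine ⟨g, ?_, ?_⟩ <;> rw [cubicAct_span_singleton_veronese, hg] <;> simp

lemma quadrics_of_span_singleton_mem_twistedCubic {w : Fin 4 → F}
    (hw : span F {w} ∈ twistedCubic F) : w 1 ^ 2 = w 0 * w 2 ∧ w 2 ^ 2 = w 1 * w 3 := by
  obtain ⟨v, -, hv⟩ := mem_twistedCubic_iff.1 hw
  obtain ⟨k, rfl⟩ := mem_span_singleton.1 (hv ▸ mem_span_singleton_self w)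
  constructor <;> simp [veronese] <;> ring

lemma cubic_eq_zero_of_eval_eq_zero (hF : 4 < ENat.card F) (p : Cubic F)
    (hp : ∀ t ≠ 0, p.toPoly.eval t = 0) : p = 0 := by
  rw [← Cubic.toPoly_eq_zero_iff, ← mul_eq_zero_iff_left Polynomial.X_ne_zero]
  refine Polynomial.eq_zero_of_forall_eval_zero_of_natDegree_lt_card _ (fun t => ?_) ?_
  · by_cases ht : t = 0 <;> simp [ht, hp]
  · have hdeg : (Polynomial.X * p.toPoly).natDegree ≤ 4 := by
      rw [Cubic.toPoly]
      compute_degree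
    have hcard : (4 : Cardinal) < Cardinal.mk F := by simpa [ENat.card] using hF
    exact lt_of_le_of_lt (by exact_mod_cast hdeg) hcard

lemma diagonal_of_forall_quadrics (hF : 4 < ENat.card F) {a b₀ b₁ b₂ b₃ c₀ c₁ c₂ c₃ d : F}
    (ha : a ≠ 0) (hd : d ≠ 0) (hdet : b₁ * c₂ - b₂ * c₁ ≠ 0)
    (hq₁ : ∀ t, (b₁ * t ^ 2 + c₁ * t) ^ 2 =
      (a * t ^ 3 + b₀ * t ^ 2 + c₀ * t) * (b₂ * t ^ 2 + c₂ * t))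
    (hq₂ : ∀ t, (b₂ * t ^ 2 + c₂ * t) ^ 2 =
      (b₁ * t ^ 2 + c₁ * t) * (b₃ * t ^ 2 + c₃ * t + d)) :
    (b₀ = 0 ∧ b₂ = 0 ∧ b₃ = 0) ∧ (c₀ = 0 ∧ c₁ = 0 ∧ c₃ = 0) ∧
      b₁ ^ 2 = a * c₂ ∧ c₂ ^ 2 = b₁ * d := by
  have hp₁ := cubic_eq_zero_of_eval_eq_zero hF
    ⟨-(a * b₂), b₁ ^ 2 - a * c₂ - b₀ * b₂, 2 * b₁ * c₁ - b₀ * c₂ - c₀ * b₂, c₁ ^ 2 - c₀ * c₂⟩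
    fun t ht => mul_left_cancel₀ (pow_ne_zero 2 ht) <| by
      simp only [Cubic.toPoly, Polynomial.eval_add, Polynomial.eval_mul, Polynomial.eval_C,
        Polynomial.eval_pow, Polynomial.eval_X]
      linear_combination hq₁ t
  have hp₂ := cubic_eq_zero_of_eval_eq_zero hF
    ⟨b₂ ^ 2 - b₁ * b₃, 2 * b₂ * c₂ - b₁ * c₃ - c₁ * b₃, c₂ ^ 2 - b₁ * d - c₁ * c₃, -(c₁ * d)⟩
    fun t ht => mul_left_cancel₀ ht <| by
      simp only [Cubic.toPoly, Polynomial.eval_add, Polynomial.eval_mul, Polynomial.eval_C,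
        Polynomial.eval_pow, Polynomial.eval_X]
      linear_combination hq₂ t
  obtain ⟨hp₁₃, hp₁₂, hp₁₁, hp₁₀⟩ := Cubic.mk.inj hp₁
  obtain ⟨hp₂₃, hp₂₂, hp₂₁, hp₂₀⟩ := Cubic.mk.inj hp₂
  obtain rfl : b₂ = 0 := by simpa [ha] using hp₁₃
  obtain rfl : c₁ = 0 := by simpa [hd] using hp₂₀
  obtain ⟨hb₁, hc₂⟩ : b₁ ≠ 0 ∧ c₂ ≠ 0 := by simpa using hdet
  simp only [hb₁, hc₂, ne_eq, OfNat.ofNat_ne_zero, not_false_eq_true, zero_pow, mul_zero,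
    zero_mul, sub_zero, zero_sub, neg_eq_zero, mul_eq_zero, false_or, or_false]
    at hp₁₂ hp₁₁ hp₁₀ hp₂₃ hp₂₂ hp₂₁
  exact ⟨⟨hp₁₁, rfl, hp₂₃⟩, ⟨hp₁₀, rfl, hp₂₂⟩, sub_eq_zero.1 hp₁₂, sub_eq_zero.1 hp₂₁⟩

lemma exists_vecMul_eq_smul_of_projAct_eq {A : GL (Fin 4) F} {v : Fin 4 → F}
    (h : projAct F A (span F {v}) = span F {v}) :
    ∃ a : F, v ᵥ* (A : Matrix (Fin 4) (Fin 4) F) = a • v := by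
  rw [projAct_span, Set.image_singleton] at h
  obtain ⟨a, ha⟩ := mem_span_singleton.1 (h ▸ mem_span_singleton_self _)
  exact ⟨a, ha.symm⟩

lemma exists_coe_eq_of_projAct_eq {A : GL (Fin 4) F}
    (h₀ : projAct F A (span F {veronese ![1, 0]}) = span F {veronese ![1, 0]})
    (h₃ : projAct F A (span F {veronese ![0, 1]}) = span F {veronese ![0, 1]}) :
    ∃ a b₀ b₁ b₂ b₃ c₀ c₁ c₂ c₃ d : F, (A : Matrix (Fin 4) (Fin 4) F) =
      !![a, 0, 0, 0; b₀, b₁, b₂, b₃; c₀, c₁, c₂, c₃; 0, 0, 0, d] := by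
  obtain ⟨a, ha⟩ := exists_vecMul_eq_smul_of_projAct_eq h₀
  obtain ⟨d, hd⟩ := exists_vecMul_eq_smul_of_projAct_eq h₃
  refine ⟨a, A 1 0, A 1 1, A 1 2, A 1 3, A 2 0, A 2 1, A 2 2, A 2 3, d, ?_⟩
  ext i j
  have haj := congrFun ha j
  have hdj := congrFun hd j
  fin_cases i <;> fin_cases j <;>
    simp_all [veronese, vecMul, dotProduct, Fin.sum_univ_succ]

lemma exists_projAct_eq_cubicAct_of_fix (hF : 4 < ENat.card F) {A : GL (Fin 4) F}
    (hA : projAct F A ∈ Gq F)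
    (h₀ : projAct F A (span F {veronese ![1, 0]}) = span F {veronese ![1, 0]})
    (h₃ : projAct F A (span F {veronese ![0, 1]}) = span F {veronese ![0, 1]}) :
    ∃ d : Fˣ, projAct F A = cubicAct (upperTri 0 d) := by
  obtain ⟨a, b₀, b₁, b₂, b₃, c₀, c₁, c₂, c₃, d, hAeq⟩ := exists_coe_eq_of_projAct_eq h₀ h₃
  have hdet : a ≠ 0 ∧ b₁ * c₂ - b₂ * c₁ ≠ 0 ∧ d ≠ 0 := by
    have hdet := (isUnits_det_units A).ne_zero
    have : (A : Matrix (Fin 4) (Fin 4) F).det = a * (b₁ * c₂ - b₂ * c₁) * d := by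
      rw [hAeq]
      simp [det_succ_row_zero, Fin.sum_univ_succ, Fin.succAbove]
      ring
    simpa [this, and_assoc] using hdet
  obtain ⟨ha, hbc, hd⟩ := hdet
  have hquad (t : F) := quadrics_of_span_singleton_mem_twistedCubic
    (w := veronese ![t, 1] ᵥ* (A : Matrix (Fin 4) (Fin 4) F)) <| by
      rw [← hA.2]
      exact ⟨_, mem_twistedCubic_iff.2 ⟨![t, 1], by simp, rfl⟩, by simp [projAct_span]⟩
  simp only [hAeq, veronese, vecMul, dotProduct, Fin.sum_univ_succ] at hquad
  obtain ⟨⟨rfl, rfl, rfl⟩, ⟨rfl, rfl, rfl⟩, hb, hc⟩ := diagonal_of_forall_quadrics hF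
    (b₀ := b₀) (b₃ := b₃) (c₀ := c₀) (c₃ := c₃) ha hd hbc
    (fun t => by simpa [mul_comm, add_assoc] using (hquad t).1)
    (fun t => by simpa [mul_comm, add_assoc] using (hquad t).2)
  have hb₁ : b₁ ≠ 0 := by rintro rfl; simp at hbc
  refine ⟨.mk0 (b₁ / a) (div_ne_zero hb₁ ha), projAct_eq_of_coe_eq_smul ha ?_⟩
  rw [hAeq]
  ext i j
  fin_cases i <;> fin_cases j <;> simp [symCube, upperTri] <;> field_simp
  · exact (mul_comm _ _).trans hb.symm
  · refine mul_left_cancel₀ hb₁ ?_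
    linear_combination (-a ^ 2) * hc + (-(b₁ ^ 2) - a * c₂) * hb

theorem mem_Gq_iff (hF : 4 < ENat.card F)
    {f : Submodule F (Fin 4 → F) → Submodule F (Fin 4 → F)} :
    f ∈ Gq F ↔ ∃ g : GL (Fin 2) F, f = cubicAct g := by
  refine ⟨fun hf => ?_, fun ⟨g, hg⟩ => hg ▸ cubicAct_mem_Gq g⟩
  obtain ⟨⟨A, rfl⟩, hA⟩ := id hf
  have hmem {v : Fin 2 → F} (hv : v ≠ 0) : projAct F A (span F {veronese v}) ∈ twistedCubic F :=
    hA ▸ ⟨_, mem_twistedCubic_iff.2 ⟨v, hv, rfl⟩, rfl⟩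
  have hne : projAct F A (span F {veronese ![1, 0]}) ≠ projAct F A (span F {veronese ![0, 1]}) :=
    (projAct_injective A).ne fun h => by
      obtain ⟨a, ha⟩ := mem_span_singleton.1 (h ▸ mem_span_singleton_self (veronese ![1, 0]))
      simpa [veronese] using congrFun ha 0
  obtain ⟨g, hg₀, hg₃⟩ := exists_cubicAct_eq_and_eq (hmem (by simp)) (hmem (by simp)) hne
  have hcomp : projAct F (A * Units.map symCube g⁻¹) = cubicAct g⁻¹ ∘ projAct F A :=
    projAct_mul _ _
  obtain ⟨d, hd⟩ := exists_projAct_eq_cubicAct_of_fix hF (hcomp ▸ cubicAct_comp_mem_Gq g⁻¹ hf)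
    (by rw [hcomp, Function.comp_apply, ← hg₀, cubicAct_inv_cubicAct])
    (by rw [hcomp, Function.comp_apply, ← hg₃, cubicAct_inv_cubicAct])
  refine ⟨upperTri 0 d * g, funext fun W => ?_⟩
  rw [cubicAct_mul, ← hd, hcomp, Function.comp_apply, Function.comp_apply, cubicAct_cubicAct_inv]

end Stabilizer

section BaseFlag

/-- The point `P(0)` of the twisted cubic. -/
def basePoint (F : Type) [Field F] : Submodule F (Fin 4 → F) :=
  span F {![0, 0, 0, 1]}

/-- The tangent at `P(0)`. -/
def baseTangent (F : Type) [Field F] : Submodule F (Fin 4 → F) :=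
  span F {![0, 0, 0, 1], ![0, 0, 1, 0]}

/-- The osculating plane at `P(0)`. -/
def basePlane (F : Type) [Field F] : Submodule F (Fin 4 → F) :=
  planeOf F ![1, 0, 0, 0]

/-- The line through `P(0)` and `(0 : 1 : m : 0)`. For varying `m` these are the lines other than
the tangent which pass through `P(0)` in its osculating plane; the lines `ℓ1` and `ℓ2` of the
theorem are those with `m = 0` and `m = 1`. -/
def baseLine (m : F) : Submodule F (Fin 4 → F) :=
  span F {![0, 0, 0, 1], ![0, 1, m, 0]}

lemma veronese_zero_one : veronese ![0, 1] = (![0, 0, 0, 1] : Fin 4 → F) := by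
  simp [veronese]

lemma mem_basePlane_iff {v : Fin 4 → F} : v ∈ basePlane F ↔ v 0 = 0 := by
  simp [basePlane, planeOf, planeForm]

lemma mem_cubicAct_basePlane_iff (g : GL (Fin 2) F) {v : Fin 4 → F} :
    v ∈ cubicAct g (basePlane F) ↔ (v ᵥ* symCube (↑g⁻¹ : Matrix (Fin 2) (Fin 2) F)) 0 = 0 := by
  rw [cubicAct, mem_projAct_iff, ← map_inv, Units.coe_map, mem_basePlane_iff]

lemma isLine_baseTangent : isLine F (baseTangent F) :=
  isLine_span_pair <| LinearIndependent.pair_iff.2 fun a b h =>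
    ⟨by simpa using congrFun h 3, by simpa using congrFun h 2⟩

lemma isLine_baseLine (m : F) : isLine F (baseLine m) :=
  isLine_span_pair <| LinearIndependent.pair_iff.2 fun a b h =>
    ⟨by simpa using congrFun h 3, by simpa using congrFun h 1⟩

lemma cubicAct_span_pair (g : GL (Fin 2) F) (u v : Fin 4 → F) :
    cubicAct g (span F {u, v}) = span F {u ᵥ* symCube (g : Matrix (Fin 2) (Fin 2) F),
      v ᵥ* symCube (g : Matrix (Fin 2) (Fin 2) F)} := by
  rw [cubicAct, projAct_span, Set.image_pair]
  rfl

lemma cubicAct_upperTri_baseTangent (c : F) (d : Fˣ) :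
    cubicAct (upperTri c d) (baseTangent F) = baseTangent F := by
  refine eq_of_le_of_isLine ((isLine_projAct_iff _).2 isLine_baseTangent) isLine_baseTangent ?_
  rw [baseTangent, cubicAct_span_pair, span_le, Set.pair_subset_iff]
  simp only [SetLike.mem_coe, mem_span_pair]
  refine ⟨⟨d ^ 3, 0, ?_⟩, ⟨3 * c * d ^ 2, d ^ 2, ?_⟩⟩ <;> ext i <;> fin_cases i <;>
    simp [symCube, upperTri, vecMul, dotProduct, Fin.sum_univ_succ]

lemma cubicAct_upperTri_baseLine (c : F) (d : Fˣ) (m : F) :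
    cubicAct (upperTri c d) (baseLine m) = baseLine (2 * c + m * d) := by
  refine eq_of_le_of_isLine ((isLine_projAct_iff _).2 (isLine_baseLine m)) (isLine_baseLine _) ?_
  rw [baseLine, cubicAct_span_pair, baseLine, span_le, Set.pair_subset_iff]
  simp only [SetLike.mem_coe, mem_span_pair]
  refine ⟨⟨d ^ 3, 0, ?_⟩, ⟨3 * c ^ 2 * d + 3 * m * c * d ^ 2, d, ?_⟩⟩ <;> ext i <;> fin_cases i <;>
    simp [symCube, upperTri, vecMul, dotProduct, Fin.sum_univ_succ] <;> ring

lemma cubicAct_upperTri_basePlane (c : F) (d : Fˣ) :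
    cubicAct (upperTri c d) (basePlane F) = basePlane F := by
  have hinv : (↑(upperTri c d)⁻¹ : Matrix (Fin 2) (Fin 2) F) = !![1, -c * ↑d⁻¹; 0, ↑d⁻¹] := rfl
  ext v
  rw [mem_cubicAct_basePlane_iff, mem_basePlane_iff, hinv]
  simp [symCube, vecMul, dotProduct, Fin.sum_univ_succ]

end BaseFlag

section OsculatingFlags

lemma cubicAct_cosetRep_some_basePoint (t : F) :
    cubicAct (cosetRep (some t)) (basePoint F) = span F {![t ^ 3, t ^ 2, t, 1]} := by
  rw [basePoint, ← veronese_zero_one, cubicAct_span_singleton_veronese]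
  simp [cosetRep, veronese]

lemma cubicAct_cosetRep_none_basePoint :
    cubicAct (cosetRep none) (basePoint F) = span F {![1, 0, 0, 0]} := by
  rw [basePoint, ← veronese_zero_one, cubicAct_span_singleton_veronese]
  simp [cosetRep, veronese]

lemma mem_twistedCubic_iff_exists_cosetRep {P : Submodule F (Fin 4 → F)} :
    P ∈ twistedCubic F ↔ ∃ o, P = cubicAct (cosetRep o) (basePoint F) := by
  simp only [Option.exists, cubicAct_cosetRep_some_basePoint, cubicAct_cosetRep_none_basePoint]
  simp [twistedCubic, cubicVecs, or_and_right, exists_or, eq_comm, or_comm]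

lemma isTangent_iff_exists_cosetRep {ℓ : Submodule F (Fin 4 → F)} :
    isTangent F ℓ ↔ ∃ o, ℓ = cubicAct (cosetRep o) (baseTangent F) := by
  have hsome (t : F) : cubicAct (cosetRep (some t)) (baseTangent F) = tangentAt F t := by
    rw [baseTangent, cubicAct_span_pair, tangentAt]
    simp [cosetRep, symCube]
  have hnone : cubicAct (cosetRep none) (baseTangent F) = tangentAtInf F := by
    rw [baseTangent, cubicAct_span_pair, tangentAtInf]
    simp [cosetRep, symCube]
  rw [isTangent, Option.exists, hnone, or_comm]
  simp only [hsome]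

lemma isOscPlane_iff_exists_cosetRep {π : Submodule F (Fin 4 → F)} :
    isOscPlane F π ↔ ∃ o, π = cubicAct (cosetRep o) (basePlane F) := by
  have hsome (t : F) : cubicAct (cosetRep (some t)) (basePlane F) = oscPlane F t := by
    have hinv : (↑(cosetRep (some t))⁻¹ : Matrix (Fin 2) (Fin 2) F) = !![1, 0; -t, 1] := rfl
    ext v
    rw [mem_cubicAct_basePlane_iff, hinv]
    simp [symCube, vecMul, dotProduct, Fin.sum_univ_succ, oscPlane, planeOf, planeForm]
    ring_nf
  have hnone : cubicAct (cosetRep none) (basePlane F) = oscPlaneInf F := by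
    have hinv : (↑(cosetRep (none : Option F))⁻¹ : Matrix (Fin 2) (Fin 2) F) = !![0, 1; 1, 0] := rfl
    ext v
    rw [mem_cubicAct_basePlane_iff, hinv]
    simp [symCube, vecMul, dotProduct, Fin.sum_univ_succ, oscPlaneInf, planeOf, planeForm]
  rw [isOscPlane, Option.exists, hnone, or_comm]
  simp only [hsome]

lemma isTangent_iff_exists_cubicAct {ℓ : Submodule F (Fin 4 → F)} :
    isTangent F ℓ ↔ ∃ g, ℓ = cubicAct g (baseTangent F) := by
  rw [isTangent_iff_exists_cosetRep, exists_eq_cubicAct_iff cubicAct_upperTri_baseTangent]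

lemma isOscPlane_iff_exists_cubicAct {π : Submodule F (Fin 4 → F)} :
    isOscPlane F π ↔ ∃ g, π = cubicAct g (basePlane F) := by
  rw [isOscPlane_iff_exists_cosetRep, exists_eq_cubicAct_iff cubicAct_upperTri_basePlane]

lemma cubicAct_cosetRep_basePoint_injective :
    Function.Injective fun o : Option F => cubicAct (cosetRep o) (basePoint F) := by
  rintro (_ | t) (_ | s) h
  · rfl
  all_goals
    simp only [cubicAct_cosetRep_some_basePoint, cubicAct_cosetRep_none_basePoint,
      span_singleton_eq_span_singleton, Units.smul_def] at h
    obtain ⟨a, ha⟩ := h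
  · simpa using congrFun ha 3
  · simpa using congrFun ha 3
  · have ha₁ : (a : F) = 1 := by simpa using congrFun ha 3
    simpa [ha₁] using congrFun ha 2

lemma cubicAct_le_cubicAct_iff (g : GL (Fin 2) F) {V W : Submodule F (Fin 4 → F)} :
    cubicAct g V ≤ cubicAct g W ↔ V ≤ W :=
  projAct_le_projAct_iff _

lemma eq_cubicAct_basePoint_of_le {P : Submodule F (Fin 4 → F)} (hP : P ∈ twistedCubic F)
    {g : GL (Fin 2) F} (hle : P ≤ cubicAct g (basePlane F)) : P = cubicAct g (basePoint F) := by
  obtain ⟨v, hv, hPv⟩ := mem_twistedCubic_iff.1 (cubicAct_mem_twistedCubic g⁻¹ hP)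
  have hv0 : v 0 = 0 := by
    rw [← cubicAct_le_cubicAct_iff g⁻¹, cubicAct_inv_cubicAct, hPv, span_singleton_le_iff_mem,
      mem_basePlane_iff] at hle
    simpa [veronese] using hle
  have hv1 : v 1 ≠ 0 := fun hv1 => hv (by ext i; fin_cases i <;> assumption)
  rw [← cubicAct_cubicAct_inv g P, hPv, basePoint, ← veronese_zero_one,
    ← span_veronese_smul hv1 ![0, 1]]
  congr 4
  ext i
  fin_cases i <;> simp [hv0]

end OsculatingFlags

section UGammaLines

lemma basePoint_le_baseTangent : basePoint F ≤ baseTangent F :=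
  span_mono (by simp)

lemma basePoint_le_baseLine (m : F) : basePoint F ≤ baseLine m :=
  span_mono (by simp)

lemma baseLine_le_basePlane (m : F) : baseLine m ≤ basePlane F := by
  simp [baseLine, span_le, Set.pair_subset_iff, mem_basePlane_iff]

lemma mem_baseLine_iff {m : F} {v : Fin 4 → F} :
    v ∈ baseLine m ↔ v 0 = 0 ∧ v 2 = v 1 * m := by
  rw [baseLine, mem_span_pair]
  constructor
  · rintro ⟨a, b, rfl⟩
    simp
  · rintro ⟨h0, h2⟩
    refine ⟨v 3, v 1, ?_⟩
    ext i
    fin_cases i <;> simp [h0, h2]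

lemma mem_baseTangent_iff {v : Fin 4 → F} : v ∈ baseTangent F ↔ v 0 = 0 ∧ v 1 = 0 := by
  rw [baseTangent, mem_span_pair]
  constructor
  · rintro ⟨a, b, rfl⟩
    simp
  · rintro ⟨h0, h1⟩
    refine ⟨v 3, v 2, ?_⟩
    ext i
    fin_cases i <;> simp [h0, h1]

lemma baseLine_injective : Function.Injective (baseLine (F := F)) := by
  intro m m' h
  have hmem : ![0, 1, m, 0] ∈ baseLine m' := h ▸ mem_baseLine_iff.2 (by simp)
  simpa using (mem_baseLine_iff.1 hmem).2

lemma baseLine_ne_baseTangent (m : F) : baseLine m ≠ baseTangent F := by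
  intro h
  have hmem : ![0, 1, m, 0] ∈ baseTangent F := h ▸ mem_baseLine_iff.2 (by simp)
  simpa using (mem_baseTangent_iff.1 hmem).2

lemma eq_baseTangent_or_exists_eq_baseLine {ℓ : Submodule F (Fin 4 → F)} (hℓ : isLine F ℓ)
    (hpoint : basePoint F ≤ ℓ) (hplane : ℓ ≤ basePlane F) :
    ℓ = baseTangent F ∨ ∃ m, ℓ = baseLine m := by
  obtain ⟨v, hv, hv'⟩ := exists_mem_notMem_span_singleton hℓ ![0, 0, 0, 1]
  have hv0 : v 0 = 0 := mem_basePlane_iff.1 (hplane hv)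
  have hspan : span F {![0, 0, 0, 1], v} = ℓ := by
    refine eq_of_le_of_isLine (isLine_span_pair ?_) hℓ ?_
    · refine (LinearIndependent.pair_iff' (by simp)).2 fun a ha => hv' ?_
      exact mem_span_singleton.2 ⟨a, ha⟩
    · exact span_le.2 (Set.pair_subset (hpoint (mem_span_singleton_self _)) hv)
  by_cases hv1 : v 1 = 0
  · refine .inl (eq_of_le_of_isLine hℓ isLine_baseTangent ?_)
    simp [← hspan, span_le, Set.pair_subset_iff, mem_baseTangent_iff, hv0, hv1]
  · refine .inr ⟨v 2 / v 1, eq_of_le_of_isLine hℓ (isLine_baseLine _) ?_⟩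
    simp [← hspan, span_le, Set.pair_subset_iff, mem_baseLine_iff, hv0, mul_div_cancel₀ _ hv1]

lemma cubicAct_cosetRep_baseLine_injective :
    Function.Injective2 fun (o : Option F) (m : F) => cubicAct (cosetRep o) (baseLine m) := by
  intro o o' m m' h
  have hle : cubicAct (cosetRep o) (basePoint F) ≤ cubicAct (cosetRep o') (basePlane F) := calc
    _ ≤ cubicAct (cosetRep o) (baseLine m) :=
      (cubicAct_le_cubicAct_iff _).2 (basePoint_le_baseLine m)
    _ = cubicAct (cosetRep o') (baseLine m') := h
    _ ≤ _ := (cubicAct_le_cubicAct_iff _).2 (baseLine_le_basePlane m')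
  obtain rfl : o = o' := cubicAct_cosetRep_basePoint_injective <|
    eq_cubicAct_basePoint_of_le (mem_twistedCubic_iff_exists_cosetRep.2 ⟨o, rfl⟩) hle
  exact ⟨rfl, baseLine_injective (projAct_injective _ h)⟩

lemma not_isTangent_cubicAct_baseLine (g : GL (Fin 2) F) (m : F) :
    ¬ isTangent F (cubicAct g (baseLine m)) := by
  intro htan
  obtain ⟨h, hh⟩ := isTangent_iff_exists_cubicAct.1 htan
  obtain ⟨o, ho⟩ := (exists_eq_cubicAct_iff cubicAct_upperTri_baseTangent).1
    ⟨h * g⁻¹, show baseLine m = _ by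
      rw [cubicAct_mul, Function.comp_apply, ← hh, cubicAct_inv_cubicAct]⟩
  have hle : cubicAct (cosetRep o) (basePoint F) ≤ cubicAct (cosetRep (some 0)) (basePlane F) := by
    rw [cosetRep_some_zero, cubicAct_one]
    calc cubicAct (cosetRep o) (basePoint F)
      _ ≤ cubicAct (cosetRep o) (baseTangent F) :=
        (cubicAct_le_cubicAct_iff _).2 basePoint_le_baseTangent
      _ = baseLine m := ho.symm
      _ ≤ basePlane F := baseLine_le_basePlane m
  obtain rfl : o = some 0 := cubicAct_cosetRep_basePoint_injective <|
    eq_cubicAct_basePoint_of_le (mem_twistedCubic_iff_exists_cosetRep.2 ⟨o, rfl⟩) hle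
  rw [cosetRep_some_zero, cubicAct_one] at ho
  exact baseLine_ne_baseTangent m ho

theorem isUGamma_iff {ℓ : Submodule F (Fin 4 → F)} :
    isUGamma F ℓ ↔ ∃ g m, ℓ = cubicAct g (baseLine m) := by
  constructor
  · rintro ⟨⟨hℓ, P, ⟨hP, hPℓ⟩, -⟩, htan, π, hπ, hℓπ⟩
    obtain ⟨g, rfl⟩ := isOscPlane_iff_exists_cubicAct.1 hπ
    obtain rfl := eq_cubicAct_basePoint_of_le hP (hPℓ.trans hℓπ)
    obtain ⟨ℓ, rfl⟩ : ∃ m, cubicAct g m = ℓ := ⟨_, cubicAct_cubicAct_inv g ℓ⟩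
    obtain rfl | ⟨m, rfl⟩ := eq_baseTangent_or_exists_eq_baseLine ((isLine_projAct_iff _).1 hℓ)
      ((cubicAct_le_cubicAct_iff g).1 hPℓ) ((cubicAct_le_cubicAct_iff g).1 hℓπ)
    · exact absurd (isTangent_iff_exists_cubicAct.2 ⟨g, rfl⟩) htan
    · exact ⟨g, m, rfl⟩
  · rintro ⟨g, m, rfl⟩
    have hplane : cubicAct g (baseLine m) ≤ cubicAct g (basePlane F) :=
      (cubicAct_le_cubicAct_iff g).2 (baseLine_le_basePlane m)
    have hpoint : cubicAct g (basePoint F) ≤ cubicAct g (baseLine m) :=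
      (cubicAct_le_cubicAct_iff g).2 (basePoint_le_baseLine m)
    have hbase : basePoint F ∈ twistedCubic F :=
      mem_twistedCubic_iff.2 ⟨![0, 1], by simp, by rw [basePoint, veronese_zero_one]⟩
    exact ⟨⟨(isLine_projAct_iff _).2 (isLine_baseLine m), _,
        ⟨cubicAct_mem_twistedCubic g hbase, hpoint⟩,
        fun P hP => eq_cubicAct_basePoint_of_le hP.1 (hP.2.trans hplane)⟩,
      not_isTangent_cubicAct_baseLine g m,
      _, isOscPlane_iff_exists_cubicAct.2 ⟨g, rfl⟩, hplane⟩

end UGammaLines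

section OrbitsAndStabilizers

lemma cubicAct_upperTri_injective :
    Function.Injective2 fun (c : F) (d : Fˣ) => cubicAct (upperTri c d) := by
  intro c c' d d' h
  have hpoint := congrFun h (span F {veronese ![1, 0]})
  simp only [cubicAct_span_singleton_veronese, span_singleton_eq_span_singleton,
    Units.smul_def] at hpoint
  obtain ⟨a, ha⟩ := hpoint
  have ha₁ : (a : F) = 1 := by simpa [upperTri, veronese] using congrFun ha 0
  obtain rfl : c = c' := by simpa [upperTri, veronese, ha₁] using congrFun ha 1
  have hline := congrFun h (baseLine 1)
  simp only [cubicAct_upperTri_baseLine] at hline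
  exact ⟨rfl, by simpa [Units.ext_iff] using baseLine_injective hline⟩

lemma mem_lineOrbit_baseLine_iff (hF : 4 < ENat.card F) {m : F} {ℓ : Submodule F (Fin 4 → F)} :
    ℓ ∈ lineOrbit F (baseLine m) ↔
      ∃ (c : F) (d : Fˣ) (o : Option F), cubicAct (cosetRep o) (baseLine (2 * c + m * d)) = ℓ := by
  constructor
  · rintro ⟨f, hf, rfl⟩
    obtain ⟨g, rfl⟩ := (mem_Gq_iff hF).1 hf
    obtain ⟨c, d, o, hg⟩ := exists_cubicAct_eq_upperTri_mul_cosetRep g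
    exact ⟨c, d, o, by rw [hg, Function.comp_apply, cubicAct_upperTri_baseLine]⟩
  · rintro ⟨c, d, o, rfl⟩
    exact ⟨_, cubicAct_mem_Gq (upperTri c d * cosetRep o), by
      rw [cubicAct_mul, Function.comp_apply, cubicAct_upperTri_baseLine]⟩

lemma mem_lineStab_baseLine_iff (hF : 4 < ENat.card F) {m : F}
    {f : Submodule F (Fin 4 → F) → Submodule F (Fin 4 → F)} :
    f ∈ lineStab F (baseLine m) ↔
      ∃ (c : F) (d : Fˣ), 2 * c + m * d = m ∧ f = cubicAct (upperTri c d) := by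
  constructor
  · rintro ⟨hf, hfix⟩
    obtain ⟨g, rfl⟩ := (mem_Gq_iff hF).1 hf
    obtain ⟨c, d, o, hg⟩ := exists_cubicAct_eq_upperTri_mul_cosetRep g
    have hfix' : cubicAct (cosetRep o) (baseLine (2 * c + m * d)) =
        cubicAct (cosetRep (some 0)) (baseLine m) := by
      rw [cosetRep_some_zero, cubicAct_one, id, ← cubicAct_upperTri_baseLine,
        ← Function.comp_apply (f := cubicAct (cosetRep o)), ← hg, hfix]
    obtain ⟨rfl, hm⟩ := cubicAct_cosetRep_baseLine_injective hfix'
    exact ⟨c, d, hm, by rw [hg, cosetRep_some_zero, cubicAct_one, Function.id_comp]⟩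
  · rintro ⟨c, d, hm, rfl⟩
    exact ⟨cubicAct_mem_Gq _, by rw [cubicAct_upperTri_baseLine, hm]⟩

lemma setOf_isUGamma_eq_union (hF : 4 < ENat.card F) :
    {ℓ | isUGamma F ℓ} = lineOrbit F (baseLine 0) ∪ lineOrbit F (baseLine 1) := by
  ext ℓ
  rw [Set.mem_ofPred, isUGamma_iff]
  constructor
  · rintro ⟨g, m, rfl⟩
    obtain rfl | hm := eq_or_ne m 0
    · exact .inl ⟨_, cubicAct_mem_Gq g, rfl⟩
    · refine .inr ⟨_, cubicAct_mem_Gq (upperTri 0 (.mk0 m hm) * g), ?_⟩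
      rw [cubicAct_mul, Function.comp_apply, cubicAct_upperTri_baseLine]
      simp
  · rintro (⟨f, hf, rfl⟩ | ⟨f, hf, rfl⟩) <;> obtain ⟨g, rfl⟩ := (mem_Gq_iff hF).1 hf
    exacts [⟨g, 0, rfl⟩, ⟨g, 1, rfl⟩]

end OrbitsAndStabilizers

section CharTwo

variable [CharP F 2]

lemma lineOrbit_baseLine_zero (hF : 4 < ENat.card F) :
    lineOrbit F (baseLine 0) = Set.range fun o => cubicAct (cosetRep o) (baseLine (0 : F)) := by
  ext ℓ
  simp [mem_lineOrbit_baseLine_iff hF, CharTwo.two_eq_zero]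

lemma lineOrbit_baseLine_one (hF : 4 < ENat.card F) :
    lineOrbit F (baseLine 1) =
      Set.range fun p : Option F × Fˣ => cubicAct (cosetRep p.1) (baseLine (p.2 : F)) := by
  ext ℓ
  simp [mem_lineOrbit_baseLine_iff hF, CharTwo.two_eq_zero, exists_comm (α := Fˣ)]

lemma lineStab_baseLine_zero (hF : 4 < ENat.card F) :
    lineStab F (baseLine 0) =
      Set.range (Function.uncurry fun (c : F) (d : Fˣ) => cubicAct (upperTri c d)) := by
  ext f
  simp [mem_lineStab_baseLine_iff hF, CharTwo.two_eq_zero, eq_comm]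

lemma lineStab_baseLine_one (hF : 4 < ENat.card F) :
    lineStab F (baseLine 1) = Set.range fun c : F => cubicAct (upperTri c 1) := by
  ext f
  simp [mem_lineStab_baseLine_iff hF, CharTwo.two_eq_zero, eq_comm]

lemma lineOrbit_baseLine_zero_ne_one (hF : 4 < ENat.card F) :
    lineOrbit F (baseLine 0) ≠ lineOrbit F (baseLine 1) := by
  intro h
  have hmem : cubicAct (cosetRep none) (baseLine (0 : F)) ∈ lineOrbit F (baseLine 1) := by
    rw [← h, lineOrbit_baseLine_zero hF]
    exact ⟨none, rfl⟩
  rw [lineOrbit_baseLine_one hF] at hmem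
  obtain ⟨⟨o, d⟩, hod⟩ := hmem
  exact d.ne_zero (cubicAct_cosetRep_baseLine_injective hod).2

lemma symCube_upperTri (c : F) (d : Fˣ) :
    symCube (upperTri c d : Matrix (Fin 2) (Fin 2) F) =
      !![1, c, c ^ 2, c ^ 3;
         0, d, 0, c ^ 2 * d;
         0, 0, (d : F) ^ 2, c * d ^ 2;
         0, 0, 0, (d : F) ^ 3] := by
  have h3 : (3 : F) = 1 := by rw [← two_add_one_eq_three, CharTwo.two_eq_zero, zero_add]
  ext i j
  fin_cases i <;> fin_cases j <;> simp [symCube, upperTri, CharTwo.two_eq_zero, h3]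

lemma cubicAct_upperTri_eq_iff (c : F) (d : Fˣ)
    {f : Submodule F (Fin 4 → F) → Submodule F (Fin 4 → F)} :
    cubicAct (upperTri c d) = f ↔ ∃ A : GL (Fin 4) F,
      (A : Matrix (Fin 4) (Fin 4) F) =
        !![1, c, c ^ 2, c ^ 3;
           0, d, 0, c ^ 2 * d;
           0, 0, (d : F) ^ 2, c * d ^ 2;
           0, 0, 0, (d : F) ^ 3] ∧
      f = projAct F A := by
  rw [← symCube_upperTri]
  constructor
  · rintro rfl
    exact ⟨_, rfl, rfl⟩
  · rintro ⟨A, hA, rfl⟩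
    rw [cubicAct, show A = Units.map symCube (upperTri c d) from Units.ext hA]

lemma lineStab_baseLine_zero_eq_setOf_matrix (hF : 4 < ENat.card F) :
    lineStab F (baseLine 0) =
      {f | ∃ c d : F, d ≠ 0 ∧ ∃ A : GL (Fin 4) F,
        (A : Matrix (Fin 4) (Fin 4) F) =
          !![1, c, c ^ 2, c ^ 3;
             0, d, 0, c ^ 2 * d;
             0, 0, d ^ 2, c * d ^ 2;
             0, 0, 0, d ^ 3] ∧
        f = projAct F A} := by
  ext f
  simp only [lineStab_baseLine_zero hF, Set.mem_range, Prod.exists, Function.uncurry_apply_pair,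
    cubicAct_upperTri_eq_iff]
  refine exists_congr fun c => ⟨?_, ?_⟩
  · rintro ⟨d, hd⟩
    exact ⟨d, d.ne_zero, hd⟩
  · rintro ⟨d, hd, h⟩
    exact ⟨.mk0 d hd, h⟩

lemma lineStab_baseLine_one_eq_setOf_matrix (hF : 4 < ENat.card F) :
    lineStab F (baseLine 1) =
      {f | ∃ c : F, ∃ A : GL (Fin 4) F,
        (A : Matrix (Fin 4) (Fin 4) F) =
          !![1, c, c ^ 2, c ^ 3;
             0, 1, 0, c ^ 2;
             0, 0, 1, c;
             0, 0, 0, 1] ∧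
        f = projAct F A} := by
  ext f
  simp [lineStab_baseLine_one hF, cubicAct_upperTri_eq_iff]

end CharTwo

section Counting

variable [CharP F 2]

lemma encard_lineOrbit_baseLine_zero (hF : 4 < ENat.card F) :
    (lineOrbit F (baseLine 0)).encard = ENat.card F + 1 := by
  rw [lineOrbit_baseLine_zero hF,
    encard_range_of_injective (cubicAct_cosetRep_baseLine_injective.left 0), card_option]

lemma encard_lineOrbit_baseLine_one (hF : 4 < ENat.card F) :
    (lineOrbit F (baseLine 1)).encard = ENat.card F ^ 2 - 1 := by
  have hinj : Function.Injective
      fun p : Option F × Fˣ => cubicAct (cosetRep p.1) (baseLine (p.2 : F)) :=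
    fun _ _ h => Prod.ext_iff.2 <|
      (cubicAct_cosetRep_baseLine_injective h).imp_right Units.ext
  have hsq : (ENat.card Fˣ + 1) ^ 2 = (ENat.card Fˣ + 1 + 1) * ENat.card Fˣ + 1 := by ring
  rw [lineOrbit_baseLine_one hF, encard_range_of_injective hinj, ENat.card_prod, card_option,
    ← card_units_add_one F, hsq,
    (ENat.addLECancellable_of_ne_top ENat.one_ne_top).add_tsub_cancel_right]

lemma encard_lineStab_baseLine_zero (hF : 4 < ENat.card F) :
    (lineStab F (baseLine 0)).encard = ENat.card F * (ENat.card F - 1) := by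
  rw [lineStab_baseLine_zero hF, encard_range_of_injective cubicAct_upperTri_injective.uncurry,
    ENat.card_prod, card_units]

lemma encard_lineStab_baseLine_one (hF : 4 < ENat.card F) :
    (lineStab F (baseLine 1)).encard = ENat.card F := by
  rw [lineStab_baseLine_one hF, encard_range_of_injective (cubicAct_upperTri_injective.left 1)]

end Counting

end TwistedCubic

open TwistedCubic in
theorem stmt_11_general (F : Type) [Field F] [CharP F 2] (hF : 4 < ENat.card F) :
    {ℓ : Submodule F (Fin 4 → F) | isUGamma F ℓ} =
      lineOrbit F (baseLine 0) ∪ lineOrbit F (baseLine 1) ∧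
    lineOrbit F (baseLine 0) ≠ lineOrbit F (baseLine 1) ∧
    (lineOrbit F (baseLine 0)).encard = ENat.card F + 1 ∧
    (lineOrbit F (baseLine 1)).encard = ENat.card F ^ 2 - 1 ∧
    (lineStab F (baseLine 0)).encard = ENat.card F * (ENat.card F - 1) ∧
    lineStab F (baseLine 0) =
      {f | ∃ c d : F, d ≠ 0 ∧ ∃ A : GL (Fin 4) F,
        (A : Matrix (Fin 4) (Fin 4) F) =
          !![1, c, c ^ 2, c ^ 3;
             0, d, 0, c ^ 2 * d;
             0, 0, d ^ 2, c * d ^ 2;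
             0, 0, 0, d ^ 3] ∧
        f = projAct F A} ∧
    (lineStab F (baseLine 1)).encard = ENat.card F ∧
    lineStab F (baseLine 1) =
      {f | ∃ c : F, ∃ A : GL (Fin 4) F,
        (A : Matrix (Fin 4) (Fin 4) F) =
          !![1, c, c ^ 2, c ^ 3;
             0, 1, 0, c ^ 2;
             0, 0, 1, c;
             0, 0, 0, 1] ∧
        f = projAct F A} :=
  ⟨setOf_isUGamma_eq_union hF, lineOrbit_baseLine_zero_ne_one hF,
    encard_lineOrbit_baseLine_zero hF, encard_lineOrbit_baseLine_one hF,
    encard_lineStab_baseLine_zero hF, lineStab_baseLine_zero_eq_setOf_matrix hF,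
    encard_lineStab_baseLine_one hF, lineStab_baseLine_one_eq_setOf_matrix hF⟩

theorem stmt_11 (q : ℕ) (F : Type) [Field F] [Fintype F]
    (hcard : Fintype.card F = q) (hq : 8 ≤ q) (hev : Even q) :
    {ℓ : Submodule F (Fin 4 → F) | isUGamma F ℓ} = lineOrbit F (Submodule.span F ({![0, 0, 0, 1], ![0, 1, 0, 0]} : Set (Fin 4 → F))) ∪ lineOrbit F (Submodule.span F ({![0, 0, 0, 1], ![0, 1, 1, 0]} : Set (Fin 4 → F))) ∧
    lineOrbit F (Submodule.span F ({![0, 0, 0, 1], ![0, 1, 0, 0]} : Set (Fin 4 → F))) ≠ lineOrbit F (Submodule.span F ({![0, 0, 0, 1], ![0, 1, 1, 0]} : Set (Fin 4 → F))) ∧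
    (lineOrbit F (Submodule.span F ({![0, 0, 0, 1], ![0, 1, 0, 0]} : Set (Fin 4 → F)))).ncard = q + 1 ∧
    (lineOrbit F (Submodule.span F ({![0, 0, 0, 1], ![0, 1, 1, 0]} : Set (Fin 4 → F)))).ncard = q ^ 2 - 1 ∧
    (lineStab F (Submodule.span F ({![0, 0, 0, 1], ![0, 1, 0, 0]} : Set (Fin 4 → F)))).ncard = q * (q - 1) ∧
    lineStab F (Submodule.span F ({![0, 0, 0, 1], ![0, 1, 0, 0]} : Set (Fin 4 → F))) =
      {f | ∃ c d : F, d ≠ 0 ∧ ∃ A : GL (Fin 4) F,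
        (↑A : Matrix (Fin 4) (Fin 4) F) =
          !![1, c, c ^ 2, c ^ 3;
             0, d, 0, c ^ 2 * d;
             0, 0, d ^ 2, c * d ^ 2;
             0, 0, 0, d ^ 3] ∧
        f = projAct F A} ∧
    (lineStab F (Submodule.span F ({![0, 0, 0, 1], ![0, 1, 1, 0]} : Set (Fin 4 → F)))).ncard = q ∧
    lineStab F (Submodule.span F ({![0, 0, 0, 1], ![0, 1, 1, 0]} : Set (Fin 4 → F))) =
      {f | ∃ c : F, ∃ A : GL (Fin 4) F,
        (↑A : Matrix (Fin 4) (Fin 4) F) =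
          !![1, c, c ^ 2, c ^ 3;
             0, 1, 0, c ^ 2;
             0, 0, 1, c;
             0, 0, 0, 1] ∧
        f = projAct F A} := by
  subst hcard
  have hchar : CharP F 2 :=
    ringChar.of_eq (FiniteField.even_card_iff_char_two.2 (Nat.even_iff.1 hev))
  have hF : 4 < ENat.card F := by
    rw [ENat.card_eq_coe_fintype_card]
    exact_mod_cast (by omega : 4 < Fintype.card F)
  obtain ⟨hunion, hne, horb₁, horb₂, hstab₁, hmat₁, hstab₂, hmat₂⟩ := stmt_11_general F hF
  rw [ENat.card_eq_coe_fintype_card] at horb₁ horb₂ hstab₁ hstab₂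
  exact ⟨hunion, hne, congrArg ENat.toNat horb₁, congrArg ENat.toNat horb₂,
    congrArg ENat.toNat hstab₁, hmat₁, congrArg ENat.toNat hstab₂, hmat₂⟩
end

section
/- For any prime power q ≥ 5, the line ℓ1 through (0:0:0:1) and (1:0:1:0) is a UnΓ-line of the twisted cubic C, i.e. it meets C exactly in P(0) = (0:0:0:1), is not a tangent, and lies in no osculating plane. Moreover, if q is odd and ρ ∈ F_q is a non-square, the line ℓ2 through (0:0:0:1) and (1:0:ρ:0) is also a UnΓ-line. -/
open Matrix Submodule

/-!
The point `P(t)` lies on `π_osc(t)` and on no other osculating plane: the form defining `π_osc(s)`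
takes the value `(t - s)³` at `P(t)`. Hence a line joining `P(t)` to a point off `π_osc(t)` lies
in no osculating plane, and it is not a tangent because each tangent lies in an osculating plane.
For `t = 0` and `(1:0:ρ:0)` with `ρ ≠ 0` the line is `x₁ = 0`, `x₂ = ρ x₀`; the first equation
leaves only the points `P(0)` and `P(∞)` of `C`, and the second one excludes `P(∞)`.
-/

section OsculatingPlanes

variable {F : Type} [Field F] {s t : F} {v : Fin 4 → F} {ℓ π : Submodule F (Fin 4 → F)}

theorem mem_oscPlane_iff :
    v ∈ oscPlane F t ↔ v 0 - 3 * t * v 1 + 3 * t ^ 2 * v 2 - t ^ 3 * v 3 = 0 := by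
  simp [oscPlane, planeOf, planeForm, sub_eq_add_neg]

theorem mem_oscPlaneInf_iff : v ∈ oscPlaneInf F ↔ v 3 = 0 := by
  simp [oscPlaneInf, planeOf, planeForm]

theorem cubicVec_mem_oscPlane_iff : ![t ^ 3, t ^ 2, t, 1] ∈ oscPlane F s ↔ t = s := by
  have form_eq_cube : t ^ 3 - 3 * s * t ^ 2 + 3 * s ^ 2 * t - s ^ 3 * 1 = (t - s) ^ 3 := by ring
  calc ![t ^ 3, t ^ 2, t, 1] ∈ oscPlane F s
      ↔ t ^ 3 - 3 * s * t ^ 2 + 3 * s ^ 2 * t - s ^ 3 * 1 = 0 := mem_oscPlane_iff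
    _ ↔ t = s := by rw [form_eq_cube, pow_eq_zero_iff three_ne_zero, sub_eq_zero]

theorem eq_oscPlane_of_cubicVec_mem (hπ : isOscPlane F π) (hmem : ![t ^ 3, t ^ 2, t, 1] ∈ π) :
    π = oscPlane F t := by
  rcases hπ with ⟨s, rfl⟩ | rfl
  · rw [cubicVec_mem_oscPlane_iff.mp hmem]
  · exact absurd (mem_oscPlaneInf_iff.mp hmem) one_ne_zero

theorem not_span_cubicVec_pair_le_of_isOscPlane (hv : v ∉ oscPlane F t) (hπ : isOscPlane F π) :
    ¬ span F {![t ^ 3, t ^ 2, t, 1], v} ≤ π := by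
  intro hle
  rw [span_le, Set.pair_subset_iff] at hle
  obtain ⟨hcubic, hvπ⟩ := hle
  exact hv (eq_oscPlane_of_cubicVec_mem hπ hcubic ▸ hvπ)

theorem tangentAt_le_oscPlane (t : F) : tangentAt F t ≤ oscPlane F t := by
  rw [tangentAt, span_le, Set.pair_subset_iff]
  refine ⟨cubicVec_mem_oscPlane_iff.mpr rfl, mem_oscPlane_iff.mpr ?_⟩
  change 3 * t ^ 2 - 3 * t * (2 * t) + 3 * t ^ 2 * 1 - t ^ 3 * 0 = 0
  ring

theorem tangentAtInf_le_oscPlaneInf : tangentAtInf F ≤ oscPlaneInf F := by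
  rw [tangentAtInf, span_le, Set.pair_subset_iff]
  exact ⟨mem_oscPlaneInf_iff.mpr rfl, mem_oscPlaneInf_iff.mpr rfl⟩

theorem exists_isOscPlane_ge_of_isTangent (hℓ : isTangent F ℓ) : ∃ π, isOscPlane F π ∧ ℓ ≤ π := by
  rcases hℓ with ⟨t, rfl⟩ | rfl
  · exact ⟨oscPlane F t, .inl ⟨t, rfl⟩, tangentAt_le_oscPlane t⟩
  · exact ⟨oscPlaneInf F, .inr rfl, tangentAtInf_le_oscPlaneInf⟩

end OsculatingPlanes

section PencilLine

/-- The line joining `P(0)` to `(1:0:ρ:0)`, a member of the pencil of lines with centre `P(0)` in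
the plane `x₁ = 0`. The line `ℓ1` is the case `ρ = 1`, and `ℓ2` the case of a non-square `ρ`. -/
def pencilLine (F : Type) [Field F] (ρ : F) : Submodule F (Fin 4 → F) :=
  span F {![0, 0, 0, 1], ![1, 0, ρ, 0]}

variable {F : Type} [Field F] {ρ : F} {v : Fin 4 → F}

theorem mem_pencilLine_iff : v ∈ pencilLine F ρ ↔ v 1 = 0 ∧ v 2 = ρ * v 0 := by
  rw [pencilLine, mem_span_pair]
  constructor
  · rintro ⟨a, b, rfl⟩
    simp [mul_comm]
  · rintro ⟨hv₁, hv₂⟩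
    refine ⟨v 3, v 0, ?_⟩
    ext i
    fin_cases i <;> simp [hv₁, hv₂, mul_comm]

theorem eq_of_mem_cubicVecs_of_mem_pencilLine (hρ : ρ ≠ 0) (hcubic : v ∈ cubicVecs F)
    (hline : v ∈ pencilLine F ρ) : v = ![0, 0, 0, 1] := by
  obtain ⟨hv₁, hv₂⟩ := mem_pencilLine_iff.mp hline
  rcases hcubic with ⟨t, rfl⟩ | rfl
  · have ht : t = 0 := pow_eq_zero_iff two_ne_zero |>.mp hv₁
    simp [ht]
  · have hρ_zero : 0 = ρ := by simpa using hv₂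
    exact absurd hρ_zero.symm hρ

theorem le_pencilLine_iff_of_mem_twistedCubic (hρ : ρ ≠ 0) {P : Submodule F (Fin 4 → F)}
    (hP : P ∈ twistedCubic F) : P ≤ pencilLine F ρ ↔ P = span F {![0, 0, 0, 1]} := by
  constructor
  · obtain ⟨v, hv, rfl⟩ := hP
    intro hle
    have hline := (span_singleton_le_iff_mem v _).mp hle
    exact congrArg (span F {·}) (eq_of_mem_cubicVecs_of_mem_pencilLine hρ hv hline)
  · rintro rfl
    exact span_mono (Set.singleton_subset_iff.mpr (Set.mem_insert _ _))

theorem not_pencilLine_le_of_isOscPlane {π : Submodule F (Fin 4 → F)} (hπ : isOscPlane F π) :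
    ¬ pencilLine F ρ ≤ π := by
  have hdir : ![1, 0, ρ, 0] ∉ oscPlane F 0 := by simp [mem_oscPlane_iff]
  simpa [pencilLine] using not_span_cubicVec_pair_le_of_isOscPlane hdir hπ

end PencilLine

theorem stmt_12_general (F : Type) [Field F] (ρ : F) (hρ : ρ ≠ 0) :
    (∀ P ∈ twistedCubic F, P ≤ pencilLine F ρ ↔ P = span F {![0, 0, 0, 1]}) ∧
    ¬ isTangent F (pencilLine F ρ) ∧
    ∀ π, isOscPlane F π → ¬ pencilLine F ρ ≤ π := by
  refine ⟨fun P hP => le_pencilLine_iff_of_mem_twistedCubic hρ hP, fun htangent => ?_,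
    fun π hπ => not_pencilLine_le_of_isOscPlane hπ⟩
  obtain ⟨π, hπ, hle⟩ := exists_isOscPlane_ge_of_isTangent htangent
  exact not_pencilLine_le_of_isOscPlane hπ hle

theorem stmt_12 (q : ℕ) (F : Type) [Field F] [Fintype F]
    (hcard : Fintype.card F = q) (hq : 5 ≤ q) :
    ((∀ P ∈ twistedCubic F, (P ≤ (Submodule.span F ({![0, 0, 0, 1], ![1, 0, 1, 0]} : Set (Fin 4 → F))) ↔ P = Submodule.span F ({![0, 0, 0, 1]} : Set (Fin 4 → F)))) ∧
      ¬ isTangent F (Submodule.span F ({![0, 0, 0, 1], ![1, 0, 1, 0]} : Set (Fin 4 → F))) ∧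
      (∀ π : Submodule F (Fin 4 → F), isOscPlane F π → ¬ (Submodule.span F ({![0, 0, 0, 1], ![1, 0, 1, 0]} : Set (Fin 4 → F))) ≤ π)) ∧
    ∀ ρ : F, Odd q → (¬ ∃ s : F, s ^ 2 = ρ) →
      (∀ P ∈ twistedCubic F, (P ≤ (Submodule.span F ({![0, 0, 0, 1], ![1, 0, ρ, 0]} : Set (Fin 4 → F))) ↔ P = Submodule.span F ({![0, 0, 0, 1]} : Set (Fin 4 → F)))) ∧
      ¬ isTangent F (Submodule.span F ({![0, 0, 0, 1], ![1, 0, ρ, 0]} : Set (Fin 4 → F))) ∧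
      (∀ π : Submodule F (Fin 4 → F), isOscPlane F π → ¬ (Submodule.span F ({![0, 0, 0, 1], ![1, 0, ρ, 0]} : Set (Fin 4 → F))) ≤ π) := by
  refine ⟨stmt_12_general F 1 one_ne_zero, fun ρ _ hρ => stmt_12_general F ρ ?_⟩
  exact fun hzero => hρ ⟨0, by simp [hzero]⟩
end

section
/- Let q ≥ 5 be an odd prime power and let ρ ∈ F_q be a non-square. The UnΓ-lines of the twisted cubic C form exactly two orbits under G_q, each of size (q³ − q)/2, namely the orbit of the line ℓ1 through (0:0:0:1) and (1:0:1:0) and the orbit of the line ℓ2 through (0:0:0:1) and (1:0:ρ:0). Moreover, ℓ1 and ℓ2 have the same stabilizer in G_q, of order 2, consisting exactly of the projectivities induced by the diagonal matrices diag(1, d, d², d³) with d ∈ {1, −1}. -/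
open Matrix Submodule

/-!
In a homogeneous parameter `(x : y)` the cubic is the curve `(x³ : x²y : xy² : y³)`, so `GL₂` acts
on it through the symmetric cube, and for `q ≥ 5` every projectivity preserving the cubic arises
this way: after composing with a suitable symmetric cube it fixes `P(0)` and `P(∞)`, and comparing
coefficients in the quadrics containing the cubic makes it diagonal.

As `GL₂` is transitive on the cubic, every UnΓ-line can be moved to a line through `P(0)`. Outside
the osculating plane `x₀ = 0` these are the lines joining `P(0)` to `(1 : b : c : 0)`, and such a
line is a unisecant precisely when `c ≠ b²`. The stabilizer of `P(0)` consists of the upper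
triangular matrices; it moves the line to the one with parameters `(0, r)`, `r = c - b²`, and `r` is
unique up to nonzero squares. Hence the orbits correspond to the square classes of nonzero elements.
The stabilizer in `GL₂` of the line `(0, r)` is `{diag(a, ±a)}`, and the orbit sizes follow from the
order of `GL₂`.
-/

open scoped RightActions

section RationalNormalCurve

variable {R : Type*} [CommRing R]

/-- The vector representing the point of the twisted cubic with homogeneous parameter
`(p 0 : p 1)`; the point `P(t)` has parameter `(t : 1)` and `P(∞)` has parameter `(1 : 0)`. -/
def cubicPoint (p : Fin 2 → R) : Fin 4 → R :=
  ![p 0 ^ 3, p 0 ^ 2 * p 1, p 0 * p 1 ^ 2, p 1 ^ 3]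

/-- The coordinates of the osculating plane of the twisted cubic at the point with homogeneous
parameter `(p 0 : p 1)`. -/
def oscCoords (p : Fin 2 → R) : Fin 4 → R :=
  ![p 1 ^ 3, -(3 * p 0 * p 1 ^ 2), 3 * p 0 ^ 2 * p 1, -p 0 ^ 3]

/-- The symmetric cube of a `2 × 2` matrix, acting on row vectors in the basis
`x³, x²y, xy², y³`: substituting `(x, y) M` for `(x, y)` in these monomials. -/
def symCube : Matrix (Fin 2) (Fin 2) R →* Matrix (Fin 4) (Fin 4) R where
  toFun M :=
    let a := M 0 0; let b := M 0 1; let c := M 1 0; let d := M 1 1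
    !![a ^ 3, a ^ 2 * b, a * b ^ 2, b ^ 3;
      3 * a ^ 2 * c, a ^ 2 * d + 2 * a * b * c, b ^ 2 * c + 2 * a * b * d, 3 * b ^ 2 * d;
      3 * a * c ^ 2, b * c ^ 2 + 2 * a * c * d, a * d ^ 2 + 2 * b * c * d, 3 * b * d ^ 2;
      c ^ 3, c ^ 2 * d, c * d ^ 2, d ^ 3]
  map_one' := by
    ext i j
    fin_cases i <;> fin_cases j <;> simp
  map_mul' M N := by
    ext i j
    fin_cases i <;> fin_cases j <;>
      simp [Matrix.mul_apply, Fin.sum_univ_succ] <;> ring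

/-- The symmetric cube as a homomorphism of general linear groups; its image induces the group
of the twisted cubic. -/
def symCubeGL : GL (Fin 2) R →* GL (Fin 4) R :=
  Units.map symCube

lemma coe_symCubeGL (M : GL (Fin 2) R) :
    (symCubeGL M : Matrix (Fin 4) (Fin 4) R) = symCube (M : Matrix (Fin 2) (Fin 2) R) :=
  rfl

lemma symCube_apply (a b c d : R) :
    symCube !![a, b; c, d] =
      !![a ^ 3, a ^ 2 * b, a * b ^ 2, b ^ 3;
        3 * a ^ 2 * c, a ^ 2 * d + 2 * a * b * c, b ^ 2 * c + 2 * a * b * d, 3 * b ^ 2 * d;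
        3 * a * c ^ 2, b * c ^ 2 + 2 * a * c * d, a * d ^ 2 + 2 * b * c * d, 3 * b * d ^ 2;
        c ^ 3, c ^ 2 * d, c * d ^ 2, d ^ 3] :=
  rfl

lemma symCube_diagonal (a e : R) :
    symCube !![a, 0; 0, a * e] =
      a ^ 3 • !![1, 0, 0, 0; 0, e, 0, 0; 0, 0, e ^ 2, 0; 0, 0, 0, e ^ 3] := by
  rw [symCube_apply]
  ext i j
  fin_cases i <;> fin_cases j <;> simp <;> ring

lemma cubicPoint_smul (k : R) (p : Fin 2 → R) : cubicPoint (k • p) = k ^ 3 • cubicPoint p := by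
  ext i
  fin_cases i <;> simp [cubicPoint] <;> ring

lemma oscCoords_smul (k : R) (p : Fin 2 → R) : oscCoords (k • p) = k ^ 3 • oscCoords p := by
  ext i
  fin_cases i <;> simp [oscCoords] <;> ring

lemma cubicPoint_vecMul_symCube (p : Fin 2 → R) (M : Matrix (Fin 2) (Fin 2) R) :
    cubicPoint p ᵥ* symCube M = cubicPoint (p ᵥ* M) := by
  rw [M.eta_fin_two, symCube_apply]
  ext i
  fin_cases i <;> simp [cubicPoint, Matrix.vecMul, dotProduct, Fin.sum_univ_succ] <;> ring

end RationalNormalCurve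

section ProjectiveLine

variable {F : Type*} [Field F]

lemma exists_eq_smul_affine_or_infinity {p : Fin 2 → F} (hp : p ≠ 0) :
    ∃ k : F, k ≠ 0 ∧ ((∃ t, p = k • ![t, 1]) ∨ p = k • ![1, 0]) := by
  by_cases hp1 : p 1 = 0
  · have hp0 : p 0 ≠ 0 := fun hp0 => hp (by ext i; fin_cases i <;> assumption)
    exact ⟨p 0, hp0, Or.inr (by ext i; fin_cases i <;> simp [hp1])⟩
  · refine ⟨p 1, hp1, Or.inl ⟨p 0 / p 1, ?_⟩⟩
    ext i
    fin_cases i <;> simp [field]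

lemma vecMul_zero_one (M : Matrix (Fin 2) (Fin 2) F) : ![0, 1] ᵥ* M = M 1 := by
  ext j
  simp [Matrix.vecMul, dotProduct]

lemma exists_vecMul_eq {p : Fin 2 → F} (hp : p ≠ 0) :
    ∃ M : GL (Fin 2) F, ![0, 1] ᵥ* (M : Matrix (Fin 2) (Fin 2) F) = p := by
  suffices h : ∃ M : Matrix (Fin 2) (Fin 2) F, M.det ≠ 0 ∧ M 1 = p by
    obtain ⟨M, hM, rfl⟩ := h
    exact ⟨.mkOfDetNeZero M hM, vecMul_zero_one M⟩
  obtain ⟨k, hk, ⟨t, rfl⟩ | rfl⟩ := exists_eq_smul_affine_or_infinity hp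
  · exact ⟨!![1, 0; k * t, k], by simpa [Matrix.det_fin_two] using hk,
      by ext j; fin_cases j <;> simp⟩
  · exact ⟨!![0, 1; k, 0], by simpa [Matrix.det_fin_two] using hk,
      by ext j; fin_cases j <;> simp⟩

lemma vecMul_ne_zero {n : Type*} [Fintype n] [DecidableEq n] (M : GL n F) {p : n → F}
    (hp : p ≠ 0) : p ᵥ* (M : Matrix n n F) ≠ 0 := fun h =>
  hp (Matrix.vecMul_injective_of_isUnit M.isUnit (h.trans (Matrix.zero_vecMul _).symm))

lemma cubic_coeffs_eq_zero (hF : 5 ≤ ENat.card F) {a b c d : F}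
    (h : ∀ t ≠ 0, a * t ^ 3 + b * t ^ 2 + c * t + d = 0) :
    a = 0 ∧ b = 0 ∧ c = 0 ∧ d = 0 := by
  classical
  obtain ⟨s, -, hs⟩ := Set.exists_subset_encard_eq (Set.encard_univ F ▸ hF)
  lift s to Finset F using Set.finite_of_encard_eq_coe hs
  have hcard : s.card = 5 := by exact_mod_cast (Set.encard_coe_eq_coe_finsetCard s).symm.trans hs
  have hdeg : (Cubic.toPoly ⟨a, b, c, d⟩).natDegree ≤ 3 := Polynomial.natDegree_cubic_le
  have hpoly : Cubic.toPoly ⟨a, b, c, d⟩ = 0 := by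
    refine Polynomial.eq_zero_of_natDegree_lt_card_of_eval_eq_zero' _ (s.erase 0)
      (fun t ht => ?_) ?_
    · simpa [Cubic.toPoly] using h t (Finset.ne_of_mem_erase ht)
    · have := s.pred_card_le_card_erase (a := 0)
      omega
  exact Cubic.ext_iff.1 ((Cubic.toPoly_eq_zero_iff _).1 hpoly)

end ProjectiveLine

section Projectivities

variable {F : Type} [Field F]

lemma vecMulLinear_injective (A : GL (Fin 4) F) :
    Function.Injective (Matrix.vecMulLinear (A : Matrix (Fin 4) (Fin 4) F)) :=
  Matrix.vecMul_injective_of_isUnit A.isUnit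

lemma projAct_injective (A : GL (Fin 4) F) : Function.Injective (projAct F A) :=
  Submodule.map_injective_of_injective (vecMulLinear_injective A)

lemma projAct_le_projAct_iff (A : GL (Fin 4) F) {V W : Submodule F (Fin 4 → F)} :
    projAct F A V ≤ projAct F A W ↔ V ≤ W :=
  Submodule.map_le_map_iff_of_injective (vecMulLinear_injective A) V W

lemma finrank_projAct (A : GL (Fin 4) F) (W : Submodule F (Fin 4 → F)) :
    Module.finrank F (projAct F A W) = Module.finrank F W :=
  (Submodule.equivMapOfInjective _ (vecMulLinear_injective A) W).finrank_eq.symm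

lemma projAct_span_singleton (A : GL (Fin 4) F) (v : Fin 4 → F) :
    projAct F A (span F {v}) = span F {v ᵥ* (A : Matrix (Fin 4) (Fin 4) F)} := by
  simp [projAct, Submodule.map_span]

lemma projAct_one : projAct F (1 : GL (Fin 4) F) = id := by
  funext W
  ext v
  simp [projAct]

lemma projAct_mul (A B : GL (Fin 4) F) : projAct F (A * B) = projAct F B ∘ projAct F A := by
  funext W
  simp only [projAct, Function.comp_apply, ← Submodule.map_comp]
  congr 1
  exact LinearMap.ext fun v => by simp [Matrix.vecMul_vecMul]

lemma projAct_eq_of_eq_smul {A B : GL (Fin 4) F} {k : F} (hk : k ≠ 0)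
    (h : (A : Matrix (Fin 4) (Fin 4) F) = k • (B : Matrix (Fin 4) (Fin 4) F)) :
    projAct F A = projAct F B := by
  funext W
  have hlin : Matrix.vecMulLinear (A : Matrix (Fin 4) (Fin 4) F) =
      k • Matrix.vecMulLinear (B : Matrix (Fin 4) (Fin 4) F) := by
    ext v i
    simp [h]
  rw [projAct, hlin, Submodule.map_smul _ _ _ hk]
  rfl

end Projectivities

section GroupOfTheCubic

variable {F : Type} [Field F]

lemma span_cubicPoint_smul {k : F} (hk : k ≠ 0) (p : Fin 2 → F) :
    span F {cubicPoint (k • p)} = span F {cubicPoint p} := by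
  rw [cubicPoint_smul, Submodule.span_singleton_smul_eq (pow_ne_zero 3 hk).isUnit]

lemma mem_twistedCubic_iff {P : Submodule F (Fin 4 → F)} :
    P ∈ twistedCubic F ↔ ∃ p ≠ 0, P = span F {cubicPoint p} := by
  constructor
  · rintro ⟨v, ⟨t, rfl⟩ | rfl, rfl⟩
    · exact ⟨![t, 1], by simp, by simp [cubicPoint]⟩
    · exact ⟨![1, 0], by simp, by simp [cubicPoint]⟩
  · rintro ⟨p, hp, rfl⟩
    obtain ⟨k, hk, ⟨t, rfl⟩ | rfl⟩ := exists_eq_smul_affine_or_infinity hp <;>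
      rw [span_cubicPoint_smul hk]
    · exact ⟨_, Or.inl ⟨t, rfl⟩, by simp [cubicPoint]⟩
    · exact ⟨_, Or.inr rfl, by simp [cubicPoint]⟩

lemma span_cubicPoint_mem_twistedCubic {p : Fin 2 → F} (hp : p ≠ 0) :
    span F {cubicPoint p} ∈ twistedCubic F :=
  mem_twistedCubic_iff.2 ⟨p, hp, rfl⟩

lemma quadrics_of_span_mem_twistedCubic {v : Fin 4 → F} (h : span F {v} ∈ twistedCubic F) :
    v 0 * v 2 = v 1 ^ 2 ∧ v 1 * v 3 = v 2 ^ 2 := by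
  obtain ⟨p, -, hvp⟩ := mem_twistedCubic_iff.1 h
  obtain ⟨k, rfl⟩ := Submodule.mem_span_singleton.1 (hvp ▸ Submodule.mem_span_singleton_self v)
  constructor <;> simp [cubicPoint] <;> ring

/-- The right action of `GL₂` on subspaces of `F⁴` through the symmetric cube, written
`W <• M`. -/
instance symCubeAction : MulAction (GL (Fin 2) F)ᵐᵒᵖ (Submodule F (Fin 4 → F)) where
  smul M W := projAct F (symCubeGL M.unop) W
  one_smul W := by
    change projAct F (symCubeGL 1) W = W
    rw [map_one, projAct_one, id]
  mul_smul M N W := by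
    change projAct F (symCubeGL (N.unop * M.unop)) W = _
    rw [map_mul, projAct_mul]
    rfl

lemma smul_eq_projAct (W : Submodule F (Fin 4 → F)) (M : GL (Fin 2) F) :
    W <• M = projAct F (symCubeGL M) W :=
  rfl

lemma span_cubicPoint_smul_GL (p : Fin 2 → F) (M : GL (Fin 2) F) :
    span F {cubicPoint p} <• M =
      span F {cubicPoint (p ᵥ* (M : Matrix (Fin 2) (Fin 2) F))} := by
  rw [smul_eq_projAct, projAct_span_singleton, coe_symCubeGL, cubicPoint_vecMul_symCube]

lemma smul_mem_twistedCubic {P : Submodule F (Fin 4 → F)} (hP : P ∈ twistedCubic F)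
    (M : GL (Fin 2) F) : P <• M ∈ twistedCubic F := by
  obtain ⟨p, hp, rfl⟩ := mem_twistedCubic_iff.1 hP
  rw [span_cubicPoint_smul_GL]
  exact span_cubicPoint_mem_twistedCubic (vecMul_ne_zero M hp)

lemma op_smul_op_inv_smul (M : GL (Fin 2) F) (W : Submodule F (Fin 4 → F)) :
    (W <• M⁻¹) <• M = W :=
  smul_inv_smul (MulOpposite.op M) W

lemma projAct_symCubeGL_mem_Gq (M : GL (Fin 2) F) : projAct F (symCubeGL M) ∈ Gq F := by
  refine ⟨⟨_, rfl⟩, Set.Subset.antisymm ?_ fun P hP => ?_⟩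
  · rintro _ ⟨P, hP, rfl⟩
    exact smul_mem_twistedCubic hP M
  · exact ⟨P <• M⁻¹, smul_mem_twistedCubic hP M⁻¹, op_smul_op_inv_smul M P⟩

lemma entries_of_maps_cubicPoints_to_quadrics (hF : 5 ≤ ENat.card F)
    {M : Matrix (Fin 4) (Fin 4) F} {a d : F} (ha : a ≠ 0) (hd : d ≠ 0)
    (hrow0 : M 0 = ![a, 0, 0, 0]) (hrow3 : M 3 = ![0, 0, 0, d])
    (hquad : ∀ t : F, let v := cubicPoint ![t, 1] ᵥ* M
      v 0 * v 2 = v 1 ^ 2 ∧ v 1 * v 3 = v 2 ^ 2) :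
    (M 1 2 = 0 ∧ M 2 1 = 0) ∧ (a * M 2 2 = M 1 1 ^ 2 ∧ M 1 1 * d = M 2 2 ^ 2) ∧
      (M 1 0 * M 2 2 = 0 ∧ M 2 0 * M 2 2 = 0) ∧ M 1 1 * M 1 3 = 0 ∧ M 1 1 * M 2 3 = 0 := by
  have himage (t : F) : cubicPoint ![t, 1] ᵥ* M =
      ![a * t ^ 3 + M 1 0 * t ^ 2 + M 2 0 * t, M 1 1 * t ^ 2 + M 2 1 * t,
        M 1 2 * t ^ 2 + M 2 2 * t, M 1 3 * t ^ 2 + M 2 3 * t + d] := by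
    ext j
    fin_cases j <;>
      simp [cubicPoint, Matrix.vecMul, dotProduct, Fin.sum_univ_four, hrow0, hrow3] <;> ring
  have hquad' (t : F) := hquad t
  simp only [himage, Matrix.cons_val] at hquad'
  -- The two equations are divisible by `t ^ 2` and `t`, leaving polynomials of degree 3 in `t`.
  obtain ⟨h12, h22, h10, h20⟩ := cubic_coeffs_eq_zero hF (a := a * M 1 2)
    (b := a * M 2 2 + M 1 0 * M 1 2 - M 1 1 ^ 2)
    (c := M 1 0 * M 2 2 + M 2 0 * M 1 2 - 2 * M 1 1 * M 2 1)
    (d := M 2 0 * M 2 2 - M 2 1 ^ 2) fun t ht => by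
      refine mul_left_cancel₀ (pow_ne_zero 2 ht) ?_
      linear_combination (hquad' t).1
  obtain ⟨h13, h23, h11, h21⟩ := cubic_coeffs_eq_zero hF (a := M 1 1 * M 1 3 - M 1 2 ^ 2)
    (b := M 1 1 * M 2 3 + M 2 1 * M 1 3 - 2 * M 1 2 * M 2 2)
    (c := M 1 1 * d + M 2 1 * M 2 3 - M 2 2 ^ 2) (d := M 2 1 * d) fun t ht => by
      refine mul_left_cancel₀ ht ?_
      linear_combination (hquad' t).2
  have hM12 : M 1 2 = 0 := by simpa [ha] using h12
  have hM21 : M 2 1 = 0 := by simpa [hd] using h21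
  simp only [hM12, hM21, mul_zero, zero_mul, add_zero, sub_zero, zero_pow two_ne_zero,
    sub_eq_zero] at h22 h10 h20 h13 h23 h11
  exact ⟨⟨hM12, hM21⟩, ⟨h22, h11⟩, ⟨h10, h20⟩, h13, h23⟩

lemma eq_smul_diagonal_of_maps_cubicPoints_to_quadrics (hF : 5 ≤ ENat.card F)
    {M : Matrix (Fin 4) (Fin 4) F} (hdet : M.det ≠ 0) {a d : F}
    (hrow0 : M 0 = ![a, 0, 0, 0]) (hrow3 : M 3 = ![0, 0, 0, d])
    (hquad : ∀ t : F, let v := cubicPoint ![t, 1] ᵥ* M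
      v 0 * v 2 = v 1 ^ 2 ∧ v 1 * v 3 = v 2 ^ 2) :
    ∃ e : F, a ≠ 0 ∧ e ≠ 0 ∧
      M = a • !![1, 0, 0, 0; 0, e, 0, 0; 0, 0, e ^ 2, 0; 0, 0, 0, e ^ 3] := by
  have ha : a ≠ 0 := by
    rintro rfl
    exact hdet (Matrix.det_eq_zero_of_row_eq_zero 0 fun j => by fin_cases j <;> simp [hrow0])
  have hd : d ≠ 0 := by
    rintro rfl
    exact hdet (Matrix.det_eq_zero_of_row_eq_zero 3 fun j => by fin_cases j <;> simp [hrow3])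
  obtain ⟨⟨hM12, hM21⟩, ⟨hM22, hM11d⟩, ⟨hM10, hM20⟩, hM13, hM23⟩ :=
    entries_of_maps_cubicPoints_to_quadrics hF ha hd hrow0 hrow3 hquad
  have hM11 : M 1 1 ≠ 0 := fun h =>
    hdet (Matrix.det_eq_zero_of_column_eq_zero 1 fun i => by
      fin_cases i <;> simp [hrow0, hrow3, h, hM21])
  have hM22ne : M 2 2 ≠ 0 := by
    intro h
    simp [h, hM11, hd] at hM11d
  have hentry22 : M 2 2 = a * (M 1 1 / a) ^ 2 := by
    field_simp
    linear_combination hM22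
  have hentry33 : d = a * (M 1 1 / a) ^ 3 := by
    refine mul_left_cancel₀ hM11 (hM11d.trans ?_)
    rw [hentry22]
    field_simp
  refine ⟨M 1 1 / a, ha, div_ne_zero hM11 ha, ?_⟩
  replace hM10 := (mul_eq_zero_iff_right hM22ne).1 hM10
  replace hM20 := (mul_eq_zero_iff_right hM22ne).1 hM20
  replace hM13 := (mul_eq_zero_iff_left hM11).1 hM13
  replace hM23 := (mul_eq_zero_iff_left hM11).1 hM23
  ext i j
  fin_cases i <;> fin_cases j <;>
    simp [hrow0, hrow3, hM12, hM21, hM10, hM20, hM13, hM23, ← hentry22, ← hentry33,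
      mul_div_cancel₀ _ ha]

lemma projAct_eq_symCubeGL_of_fixes_zero_infinity (hF : 5 ≤ ENat.card F) {A : GL (Fin 4) F}
    (hA : Set.MapsTo (projAct F A) (twistedCubic F) (twistedCubic F))
    (hinf : projAct F A (span F {cubicPoint ![1, 0]}) = span F {cubicPoint ![1, 0]})
    (hzero : projAct F A (span F {cubicPoint ![0, 1]}) = span F {cubicPoint ![0, 1]}) :
    ∃ N : GL (Fin 2) F, projAct F A = projAct F (symCubeGL N) := by
  rw [projAct_span_singleton] at hinf hzero
  obtain ⟨a, ha⟩ :=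
    Submodule.mem_span_singleton.1 (hinf ▸ Submodule.mem_span_singleton_self _)
  obtain ⟨d, hd⟩ :=
    Submodule.mem_span_singleton.1 (hzero ▸ Submodule.mem_span_singleton_self _)
  have hquad (t : F) := quadrics_of_span_mem_twistedCubic (projAct_span_singleton A _ ▸
    hA (span_cubicPoint_mem_twistedCubic (p := ![t, 1]) (by simp)))
  have hrow0 : (A : Matrix (Fin 4) (Fin 4) F) 0 = ![a, 0, 0, 0] := by
    simpa [cubicPoint, Matrix.vecMul, dotProduct, Fin.sum_univ_four, funext_iff] using ha.symm
  have hrow3 : (A : Matrix (Fin 4) (Fin 4) F) 3 = ![0, 0, 0, d] := by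
    simpa [cubicPoint, Matrix.vecMul, dotProduct, Fin.sum_univ_four, funext_iff] using hd.symm
  obtain ⟨e, ha0, he, hdiag⟩ := eq_smul_diagonal_of_maps_cubicPoints_to_quadrics hF
    (Matrix.isUnits_det_units A).ne_zero hrow0 hrow3 hquad
  refine ⟨.mkOfDetNeZero !![1, 0; 0, e] (by simpa [Matrix.det_fin_two] using he),
    projAct_eq_of_eq_smul ha0 (hdiag.trans (congrArg (a • ·) ?_))⟩
  simpa [coe_symCubeGL] using (symCube_diagonal 1 e).symm

lemma span_cubicPoint_zero_ne_infinity :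
    span F {cubicPoint ![0, 1]} ≠ span F {cubicPoint (![1, 0] : Fin 2 → F)} := by
  intro h
  obtain ⟨k, hk⟩ := Submodule.mem_span_singleton.1 (h ▸ Submodule.mem_span_singleton_self _)
  simpa [cubicPoint] using congrFun hk 3

lemma exists_GL_smul_eq_of_linearIndependent {p r : Fin 2 → F}
    (h : LinearIndependent F ![p, r]) :
    ∃ M : GL (Fin 2) F, span F {cubicPoint ![1, 0]} <• M = span F {cubicPoint p} ∧
      span F {cubicPoint ![0, 1]} <• M = span F {cubicPoint r} := by
  obtain ⟨M, hM⟩ := (Matrix.linearIndependent_rows_iff_isUnit (A := Matrix.of ![p, r])).1 h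
  refine ⟨M, ?_, ?_⟩ <;> rw [span_cubicPoint_smul_GL, hM] <;> simp

lemma exists_projAct_eq_symCubeGL (hF : 5 ≤ ENat.card F) {A : GL (Fin 4) F}
    (hA : Set.MapsTo (projAct F A) (twistedCubic F) (twistedCubic F)) :
    ∃ M : GL (Fin 2) F, projAct F A = projAct F (symCubeGL M) := by
  obtain ⟨p, hp, hAp⟩ := mem_twistedCubic_iff.1
    (hA (span_cubicPoint_mem_twistedCubic (p := ![1, 0]) (by simp)))
  obtain ⟨r, hr, hAr⟩ := mem_twistedCubic_iff.1
    (hA (span_cubicPoint_mem_twistedCubic (p := ![0, 1]) (by simp)))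
  have hindep : LinearIndependent F ![p, r] := by
    refine (LinearIndependent.pair_iff' hp).2 fun k hk => ?_
    have hk0 : k ≠ 0 := by
      rintro rfl
      exact hr (by simpa using hk.symm)
    rw [← hk, span_cubicPoint_smul hk0, ← hAp] at hAr
    exact span_cubicPoint_zero_ne_infinity (projAct_injective A hAr)
  obtain ⟨M, hMp, hMr⟩ := exists_GL_smul_eq_of_linearIndependent hindep
  have hB (W : Submodule F (Fin 4 → F)) :
      projAct F (A * symCubeGL M⁻¹) W = projAct F A W <• M⁻¹ :=
    congrFun (projAct_mul _ _) W
  obtain ⟨N, hN⟩ := projAct_eq_symCubeGL_of_fixes_zero_infinity hF (A := A * symCubeGL M⁻¹)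
    (fun P hP => by rw [hB]; exact smul_mem_twistedCubic (hA hP) M⁻¹)
    (by rw [hB, hAp, ← hMp]; exact inv_smul_smul (MulOpposite.op M) _)
    (by rw [hB, hAr, ← hMr]; exact inv_smul_smul (MulOpposite.op M) _)
  refine ⟨N * M, ?_⟩
  rw [map_mul, projAct_mul, ← hN, ← projAct_mul, map_inv, inv_mul_cancel_right]

lemma Gq_eq_range (hF : 5 ≤ ENat.card F) :
    Gq F = Set.range fun M : GL (Fin 2) F => projAct F (symCubeGL M) := by
  refine Set.Subset.antisymm ?_ (Set.range_subset_iff.2 projAct_symCubeGL_mem_Gq)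
  rintro _ ⟨⟨A, rfl⟩, hA⟩
  obtain ⟨M, hM⟩ := exists_projAct_eq_symCubeGL hF (Set.mapsTo_iff_image_subset.2 hA.subset)
  exact ⟨M, hM.symm⟩

lemma lineOrbit_eq_orbit (hF : 5 ≤ ENat.card F) (ℓ : Submodule F (Fin 4 → F)) :
    lineOrbit F ℓ = MulAction.orbit (GL (Fin 2) F)ᵐᵒᵖ ℓ := by
  ext m
  simp only [lineOrbit, Gq_eq_range hF, Set.exists_range_iff, MulAction.mem_orbit_iff,
    MulOpposite.op_surjective.exists, smul_eq_projAct, Set.mem_ofPred_eq]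

end GroupOfTheCubic

section OsculatingPlanes

variable {F : Type} [Field F]

lemma planeOf_smul {k : F} (hk : k ≠ 0) (c : Fin 4 → F) : planeOf F (k • c) = planeOf F c := by
  have hform : planeForm F (k • c) = k • planeForm F c := by
    refine LinearMap.ext fun v => ?_
    simp [planeForm]
    ring
  rw [planeOf, hform, LinearMap.ker_smul _ _ hk, planeOf]

lemma isOscPlane_iff {π : Submodule F (Fin 4 → F)} :
    isOscPlane F π ↔ ∃ p ≠ 0, π = planeOf F (oscCoords p) := by
  have hinf : oscPlaneInf F = planeOf F (oscCoords ![1, 0]) := by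
    rw [oscPlaneInf, ← planeOf_smul (neg_ne_zero.2 one_ne_zero)]
    simp [oscCoords]
  have haffine (t : F) : oscPlane F t = planeOf F (oscCoords ![t, 1]) := by
    simp [oscPlane, oscCoords]
  constructor
  · rintro (⟨t, rfl⟩ | rfl)
    · exact ⟨![t, 1], by simp, haffine t⟩
    · exact ⟨![1, 0], by simp, hinf⟩
  · rintro ⟨p, hp, rfl⟩
    obtain ⟨k, hk, ⟨t, rfl⟩ | rfl⟩ := exists_eq_smul_affine_or_infinity hp <;>
      rw [oscCoords_smul, planeOf_smul (pow_ne_zero 3 hk)]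
    · exact Or.inl ⟨t, (haffine t).symm⟩
    · exact Or.inr hinf.symm

lemma planeForm_oscCoords_vecMul (p : Fin 2 → F) (v : Fin 4 → F)
    (M : Matrix (Fin 2) (Fin 2) F) :
    planeForm F (oscCoords (p ᵥ* M)) (v ᵥ* symCube M) =
      M.det ^ 3 * planeForm F (oscCoords p) v := by
  rw [M.eta_fin_two, symCube_apply]
  simp only [planeForm, LinearMap.coe_mk, AddHom.coe_mk, oscCoords, Matrix.vecMul, dotProduct,
    Fin.sum_univ_two, Fin.sum_univ_four, Matrix.det_fin_two, Matrix.of_apply, Matrix.cons_val]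
  ring

lemma smul_le_planeOf_oscCoords_iff (ℓ : Submodule F (Fin 4 → F)) (M : GL (Fin 2) F)
    (p : Fin 2 → F) :
    ℓ <• M ≤ planeOf F (oscCoords (p ᵥ* (M : Matrix (Fin 2) (Fin 2) F))) ↔
      ℓ ≤ planeOf F (oscCoords p) := by
  have hdet : (M : Matrix (Fin 2) (Fin 2) F).det ^ 3 ≠ 0 :=
    pow_ne_zero 3 (Matrix.isUnits_det_units M).ne_zero
  rw [smul_eq_projAct, projAct, Submodule.map_le_iff_le_comap]
  refine forall₂_congr fun v _ => ?_
  rw [Submodule.mem_comap, Matrix.vecMulLinear_apply, coe_symCubeGL, planeOf, planeOf,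
    LinearMap.mem_ker, LinearMap.mem_ker, planeForm_oscCoords_vecMul, mul_eq_zero_iff_left hdet]

lemma exists_isOscPlane_of_isTangent {ℓ : Submodule F (Fin 4 → F)} (h : isTangent F ℓ) :
    ∃ π, isOscPlane F π ∧ ℓ ≤ π := by
  obtain ⟨t, rfl⟩ | rfl := h
  · refine ⟨oscPlane F t, Or.inl ⟨t, rfl⟩, Submodule.span_le.2 ?_⟩
    simp only [Set.pair_subset_iff, SetLike.mem_coe, oscPlane, planeOf, LinearMap.mem_ker]
    constructor <;> simp [planeForm] <;> ring
  · refine ⟨oscPlaneInf F, Or.inr rfl, Submodule.span_le.2 ?_⟩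
    simp [Set.pair_subset_iff, oscPlaneInf, planeOf, planeForm]

lemma isUnGamma_iff {ℓ : Submodule F (Fin 4 → F)} :
    isUnGamma F ℓ ↔ isUnisecant F ℓ ∧ ∀ p ≠ 0, ¬ ℓ ≤ planeOf F (oscCoords p) := by
  constructor
  · rintro ⟨hsec, -, hosc⟩
    exact ⟨hsec, fun p hp => hosc _ (isOscPlane_iff.2 ⟨p, hp, rfl⟩)⟩
  · rintro ⟨hsec, hosc⟩
    have hosc' (π) (hπ : isOscPlane F π) : ¬ ℓ ≤ π := by
      obtain ⟨p, hp, rfl⟩ := isOscPlane_iff.1 hπ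
      exact hosc p hp
    refine ⟨hsec, fun htan => ?_, hosc'⟩
    obtain ⟨π, hπ, hℓπ⟩ := exists_isOscPlane_of_isTangent htan
    exact hosc' π hπ hℓπ

lemma isUnisecant_smul {ℓ : Submodule F (Fin 4 → F)} (h : isUnisecant F ℓ) (M : GL (Fin 2) F) :
    isUnisecant F (ℓ <• M) := by
  obtain ⟨hline, P, ⟨hP, hPℓ⟩, huniq⟩ := h
  refine ⟨(finrank_projAct _ ℓ).trans hline, P <• M,
    ⟨smul_mem_twistedCubic hP M, (projAct_le_projAct_iff _).2 hPℓ⟩, ?_⟩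
  rintro Q ⟨hQ, hQℓ⟩
  have hQM : Q <• M⁻¹ = P := by
    refine huniq _ ⟨smul_mem_twistedCubic hQ M⁻¹, ?_⟩
    rwa [← projAct_le_projAct_iff (symCubeGL M), ← smul_eq_projAct, op_smul_op_inv_smul]
  rw [← hQM, op_smul_op_inv_smul]

lemma isUnGamma_smul {ℓ : Submodule F (Fin 4 → F)} (h : isUnGamma F ℓ) (M : GL (Fin 2) F) :
    isUnGamma F (ℓ <• M) := by
  rw [isUnGamma_iff] at h ⊢
  refine ⟨isUnisecant_smul h.1 M, fun p hp hle => h.2 _ (vecMul_ne_zero M⁻¹ hp) ?_⟩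
  rw [← smul_le_planeOf_oscCoords_iff _ M, Matrix.vecMul_vecMul, ← Units.val_mul,
    inv_mul_cancel, Units.val_one, Matrix.vecMul_one]
  exact hle

end OsculatingPlanes

section LinesThroughZero

variable {F : Type} [Field F]

/-- The line joining the point `P(0) = (0 : 0 : 0 : 1)` of the twisted cubic to
`(1 : b : c : 0)`; these are the lines through `P(0)` outside the osculating plane `x₀ = 0`. -/
def lineAtZero (b c : F) : Submodule F (Fin 4 → F) :=
  span F {![0, 0, 0, 1], ![1, b, c, 0]}

lemma mem_lineAtZero_iff {b c : F} {v : Fin 4 → F} :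
    v ∈ lineAtZero b c ↔ v 1 = v 0 * b ∧ v 2 = v 0 * c := by
  rw [lineAtZero, Submodule.mem_span_pair]
  constructor
  · rintro ⟨x, y, rfl⟩
    simp
  · rintro ⟨h1, h2⟩
    refine ⟨v 3, v 0, ?_⟩
    ext i
    fin_cases i <;> simp [h1, h2]

lemma isLine_lineAtZero (b c : F) : isLine F (lineAtZero b c) := by
  have hindep : LinearIndependent F ![![0, 0, 0, 1], ![1, b, c, 0]] := by
    refine LinearIndependent.pair_iff.2 fun x y hxy => ?_
    exact ⟨by simpa using congrFun hxy 3, by simpa using congrFun hxy 0⟩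
  rw [isLine, lineAtZero, ← Matrix.range_cons_cons_empty, finrank_span_eq_card hindep,
    Fintype.card_fin]

lemma span_cubicPoint_le_lineAtZero_iff {b c : F} {p : Fin 2 → F} :
    span F {cubicPoint p} ≤ lineAtZero b c ↔ p 0 = 0 ∨ p 1 = p 0 * b ∧ p 1 ^ 2 = p 0 ^ 2 * c := by
  rw [Submodule.span_singleton_le_iff_mem, mem_lineAtZero_iff]
  by_cases hp : p 0 = 0
  · simp [cubicPoint, hp]
  · have hsq : p 0 ^ 2 ≠ 0 := pow_ne_zero 2 hp
    simp only [cubicPoint, Matrix.cons_val, hp, false_or]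
    rw [show p 0 ^ 3 * b = p 0 ^ 2 * (p 0 * b) by ring,
      show p 0 ^ 3 * c = p 0 * (p 0 ^ 2 * c) by ring, mul_right_inj' hsq, mul_right_inj' hp]

lemma span_cubicPoint_zero_le_lineAtZero (b c : F) :
    span F {cubicPoint ![0, 1]} ≤ lineAtZero b c :=
  span_cubicPoint_le_lineAtZero_iff.2 (Or.inl rfl)

lemma eq_zero_of_span_cubicPoint_le_lineAtZero {b c : F} (hbc : c ≠ b ^ 2) {p : Fin 2 → F}
    (h : span F {cubicPoint p} ≤ lineAtZero b c) : p 0 = 0 := by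
  by_contra hp
  obtain ⟨h1, h2⟩ := (span_cubicPoint_le_lineAtZero_iff.1 h).resolve_left hp
  refine hbc (mul_left_cancel₀ (pow_ne_zero 2 hp) ?_)
  rw [← h2, h1]
  ring

lemma isUnGamma_lineAtZero {b c : F} (hbc : c ≠ b ^ 2) : isUnGamma F (lineAtZero b c) := by
  refine isUnGamma_iff.2 ⟨⟨isLine_lineAtZero b c, span F {cubicPoint ![0, 1]},
    ⟨span_cubicPoint_mem_twistedCubic (by simp), span_cubicPoint_zero_le_lineAtZero b c⟩, ?_⟩,
    fun p hp hle => ?_⟩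
  · rintro P ⟨hP, hPℓ⟩
    obtain ⟨p, hp, rfl⟩ := mem_twistedCubic_iff.1 hP
    have hp0 := eq_zero_of_span_cubicPoint_le_lineAtZero hbc hPℓ
    obtain ⟨k, hk, ⟨t, rfl⟩ | rfl⟩ := exists_eq_smul_affine_or_infinity hp
    · rw [span_cubicPoint_smul hk, (by simpa [hk] using hp0 : t = 0)]
    · simp [hk] at hp0
  · have hp0 : p 0 = 0 := by
      simpa [planeOf, planeForm, oscCoords] using
        hle ((mem_lineAtZero_iff (v := ![0, 0, 0, 1])).2 (by simp))
    have hp1 : p 1 = 0 := by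
      simpa [planeOf, planeForm, oscCoords, hp0] using
        hle ((mem_lineAtZero_iff (v := ![1, b, c, 0])).2 (by simp))
    exact hp (by ext i; fin_cases i <;> assumption)

lemma exists_eq_lineAtZero {ℓ : Submodule F (Fin 4 → F)} (hℓ : isUnGamma F ℓ)
    (hzero : span F {cubicPoint ![0, 1]} ≤ ℓ) : ∃ b c, c ≠ b ^ 2 ∧ ℓ = lineAtZero b c := by
  obtain ⟨⟨hline, hsec⟩, hosc⟩ := isUnGamma_iff.1 hℓ
  obtain ⟨v, hv, hv0⟩ := SetLike.not_le_iff_exists.1 (hosc ![0, 1] (by simp))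
  replace hv0 : v 0 ≠ 0 := by simpa [planeOf, planeForm, oscCoords] using hv0
  have hle : lineAtZero (v 1 / v 0) (v 2 / v 0) ≤ ℓ := by
    have hP : ![0, 0, 0, 1] ∈ ℓ := by
      simpa [cubicPoint] using hzero (Submodule.mem_span_singleton_self _)
    have hcomb : (v 0)⁻¹ • (v - v 3 • ![0, 0, 0, 1]) = ![1, v 1 / v 0, v 2 / v 0, 0] := by
      ext i
      fin_cases i <;> simp [hv0, div_eq_inv_mul, Matrix.vecHead, Matrix.vecTail]
    exact Submodule.span_le.2 (Set.pair_subset_iff.2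
      ⟨hP, hcomb ▸ ℓ.smul_mem _ (ℓ.sub_mem hv (ℓ.smul_mem _ hP))⟩)
  have heq := (Submodule.eq_of_le_of_finrank_eq hle
    ((isLine_lineAtZero _ _).trans hline.symm)).symm
  refine ⟨v 1 / v 0, v 2 / v 0, fun hsq => ?_, heq⟩
  have hspan : span F {cubicPoint ![0, 1]} = span F {cubicPoint ![1, v 1 / v 0]} := by
    refine hsec.unique ⟨span_cubicPoint_mem_twistedCubic (by simp), hzero⟩
      ⟨span_cubicPoint_mem_twistedCubic (by simp), heq ▸ ?_⟩
    exact span_cubicPoint_le_lineAtZero_iff.2 (Or.inr (by simp [hsq]))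
  obtain ⟨k, hk⟩ := Submodule.mem_span_singleton.1
    (hspan.symm ▸ Submodule.mem_span_singleton_self (cubicPoint ![1, v 1 / v 0]))
  simpa [cubicPoint] using congrFun hk 0

end LinesThroughZero

section Orbits

variable {F : Type} [Field F]

lemma smul_eq_iff_le_of_isLine {ℓ m : Submodule F (Fin 4 → F)} (hℓ : isLine F ℓ)
    (hm : isLine F m) (M : GL (Fin 2) F) : ℓ <• M = m ↔ ℓ <• M ≤ m :=
  ⟨Eq.le, fun h =>
    Submodule.eq_of_le_of_finrank_eq h (((finrank_projAct _ ℓ).trans hℓ).trans hm.symm)⟩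

lemma lineAtZero_smul_le_iff {r b c : F} {M : GL (Fin 2) F} :
    lineAtZero 0 r <• M ≤ lineAtZero b c ↔ span F {cubicPoint (M 1)} ≤ lineAtZero b c ∧
      ![1, 0, r, 0] ᵥ* symCube (M : Matrix (Fin 2) (Fin 2) F) ∈ lineAtZero b c := by
  have hzero : ![0, 0, 0, 1] ᵥ* symCube (M : Matrix (Fin 2) (Fin 2) F) = cubicPoint (M 1) := by
    rw [← vecMul_zero_one (M : Matrix (Fin 2) (Fin 2) F), ← cubicPoint_vecMul_symCube]
    simp [cubicPoint]
  rw [Submodule.span_singleton_le_iff_mem, ← hzero, smul_eq_projAct, projAct, lineAtZero,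
    Submodule.map_span_le]
  simp [coe_symCubeGL]

lemma diagonal_ne_zero_of_upperTriangular {M : GL (Fin 2) F} (hM : M 1 0 = 0) :
    M 0 0 ≠ 0 ∧ M 1 1 ≠ 0 := by
  have hdet := (Matrix.isUnits_det_units M).ne_zero
  rwa [Matrix.det_fin_two, hM, mul_zero, sub_zero, mul_ne_zero_iff] at hdet

lemma vecMul_symCube_mem_lineAtZero_iff {r b c : F} {M : GL (Fin 2) F} (hM : M 1 0 = 0) :
    ![1, 0, r, 0] ᵥ* symCube (M : Matrix (Fin 2) (Fin 2) F) ∈ lineAtZero b c ↔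
      M 0 1 = M 0 0 * b ∧ M 0 1 ^ 2 + r * M 1 1 ^ 2 = M 0 0 ^ 2 * c := by
  have hM00 : M 0 0 ≠ 0 := (diagonal_ne_zero_of_upperTriangular hM).1
  have himage : ![1, 0, r, 0] ᵥ* symCube (M : Matrix (Fin 2) (Fin 2) F) =
      ![M 0 0 ^ 2 * M 0 0, M 0 0 ^ 2 * M 0 1, M 0 0 * (M 0 1 ^ 2 + r * M 1 1 ^ 2),
        M 0 1 ^ 3 + 3 * r * M 0 1 * M 1 1 ^ 2] := by
    rw [Matrix.eta_fin_two (M : Matrix (Fin 2) (Fin 2) F), symCube_apply, hM]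
    ext j
    fin_cases j <;> simp [Matrix.vecMul, dotProduct, Fin.sum_univ_four] <;> ring
  rw [himage, mem_lineAtZero_iff]
  simp only [Matrix.cons_val]
  rw [mul_assoc, mul_right_inj' (pow_ne_zero 2 hM00),
    show M 0 0 ^ 2 * M 0 0 * c = M 0 0 * (M 0 0 ^ 2 * c) by ring, mul_right_inj' hM00]

lemma lineAtZero_smul_eq_iff {r b c : F} (hbc : c ≠ b ^ 2) {M : GL (Fin 2) F} :
    lineAtZero 0 r <• M = lineAtZero b c ↔
      M 1 0 = 0 ∧ M 0 1 = M 0 0 * b ∧ M 0 1 ^ 2 + r * M 1 1 ^ 2 = M 0 0 ^ 2 * c := by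
  rw [smul_eq_iff_le_of_isLine (isLine_lineAtZero 0 r) (isLine_lineAtZero b c),
    lineAtZero_smul_le_iff]
  constructor
  · rintro ⟨hzero, hmem⟩
    have hM : M 1 0 = 0 := eq_zero_of_span_cubicPoint_le_lineAtZero hbc hzero
    exact ⟨hM, (vecMul_symCube_mem_lineAtZero_iff hM).1 hmem⟩
  · rintro ⟨hM, h⟩
    exact ⟨span_cubicPoint_le_lineAtZero_iff.2 (Or.inl hM),
      (vecMul_symCube_mem_lineAtZero_iff hM).2 h⟩

lemma lineAtZero_mem_orbit_iff {r b c : F} (hbc : c ≠ b ^ 2) :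
    lineAtZero b c ∈ MulAction.orbit (GL (Fin 2) F)ᵐᵒᵖ (lineAtZero 0 r) ↔
      ∃ e : F, c = b ^ 2 + r * e ^ 2 := by
  rw [MulAction.mem_orbit_iff, MulOpposite.op_surjective.exists]
  constructor
  · rintro ⟨M, hM⟩
    obtain ⟨h10, h01, hc⟩ := (lineAtZero_smul_eq_iff hbc).1 hM
    have hM00 : M 0 0 ≠ 0 := (diagonal_ne_zero_of_upperTriangular h10).1
    refine ⟨M 1 1 / M 0 0, ?_⟩
    field_simp
    linear_combination -hc + (M 0 1 + M 0 0 * b) * h01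
  · rintro ⟨e, rfl⟩
    have he : e ≠ 0 := by
      rintro rfl
      exact hbc (by simp)
    exact ⟨.mkOfDetNeZero !![1, b; 0, e] (by simpa [Matrix.det_fin_two] using he),
      (lineAtZero_smul_eq_iff hbc).2 (by simp)⟩

lemma exists_smul_eq_lineAtZero {ℓ : Submodule F (Fin 4 → F)} (hℓ : isUnGamma F ℓ) :
    ∃ (M : GL (Fin 2) F) (b c : F), c ≠ b ^ 2 ∧ ℓ = lineAtZero b c <• M := by
  obtain ⟨P, ⟨hP, hPℓ⟩, -⟩ := hℓ.1.2
  obtain ⟨p, hp, rfl⟩ := mem_twistedCubic_iff.1 hP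
  obtain ⟨M, rfl⟩ := exists_vecMul_eq hp
  have hzero : span F {cubicPoint ![0, 1]} ≤ ℓ <• M⁻¹ := by
    rwa [← projAct_le_projAct_iff (symCubeGL M), ← smul_eq_projAct, ← smul_eq_projAct,
      op_smul_op_inv_smul, span_cubicPoint_smul_GL]
  obtain ⟨b, c, hbc, heq⟩ := exists_eq_lineAtZero (isUnGamma_smul hℓ M⁻¹) hzero
  exact ⟨M, b, c, hbc, by rw [← heq, op_smul_op_inv_smul]⟩

lemma isUnGamma_iff_mem_orbit {ℓ : Submodule F (Fin 4 → F)} :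
    isUnGamma F ℓ ↔ ∃ r ≠ 0, ℓ ∈ MulAction.orbit (GL (Fin 2) F)ᵐᵒᵖ (lineAtZero 0 r) := by
  constructor
  · intro hℓ
    obtain ⟨M, b, c, hbc, rfl⟩ := exists_smul_eq_lineAtZero hℓ
    refine ⟨c - b ^ 2, sub_ne_zero.2 hbc, MulAction.mem_orbit_of_mem_orbit (MulOpposite.op M) ?_⟩
    exact (lineAtZero_mem_orbit_iff hbc).2 ⟨1, by ring⟩
  · rintro ⟨r, hr, M, rfl⟩
    exact isUnGamma_smul (isUnGamma_lineAtZero (by simpa using hr)) M.unop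

lemma orbit_lineAtZero_eq_iff {r s : F} (hs : s ≠ 0) :
    MulAction.orbit (GL (Fin 2) F)ᵐᵒᵖ (lineAtZero 0 s) =
      MulAction.orbit (GL (Fin 2) F)ᵐᵒᵖ (lineAtZero 0 r) ↔ ∃ e : F, s = r * e ^ 2 := by
  rw [MulAction.orbit_eq_iff, lineAtZero_mem_orbit_iff (by simpa using hs)]
  simp

end Orbits

section Stabilizer

variable {F : Type} [Field F]

/-- The diagonal matrix `diag(a, ad)`; up to the scalar `a³`, its symmetric cube is
`diag(1, d, d², d³)`. -/
def scaledDiag (a d : Fˣ) : GL (Fin 2) F :=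
  .mkOfDetNeZero !![(a : F), 0; 0, a * d] (by simp [Matrix.det_fin_two])

lemma scaledDiag_injective : Function.Injective fun x : Fˣ × Fˣ => scaledDiag x.1 x.2 := by
  rintro ⟨a, d⟩ ⟨a', d'⟩ h
  have hentry (i j : Fin 2) : scaledDiag a d i j = scaledDiag a' d' i j :=
    congrArg (fun M : GL (Fin 2) F => M i j) h
  obtain rfl : a = a' := Units.ext (hentry 0 0)
  obtain rfl : d = d' := Units.ext (mul_left_cancel₀ a.ne_zero (hentry 1 1))
  rfl

lemma coe_symCubeGL_scaledDiag (a d : Fˣ) :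
    (symCubeGL (scaledDiag a d) : Matrix (Fin 4) (Fin 4) F) =
      (a : F) ^ 3 • !![1, 0, 0, 0; 0, (d : F), 0, 0; 0, 0, (d : F) ^ 2, 0; 0, 0, 0, (d : F) ^ 3] :=
  symCube_diagonal (a : F) d

lemma projAct_symCubeGL_scaledDiag (a d : Fˣ) :
    projAct F (symCubeGL (scaledDiag a d)) = projAct F (symCubeGL (scaledDiag 1 d)) :=
  projAct_eq_of_eq_smul (pow_ne_zero 3 a.ne_zero) <| by
    rw [coe_symCubeGL_scaledDiag, coe_symCubeGL_scaledDiag, Units.val_one, one_pow, one_smul]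

lemma projAct_symCubeGL_scaledDiag_injective :
    Function.Injective fun d : Fˣ => projAct F (symCubeGL (scaledDiag 1 d)) := by
  intro d e h
  have hspan := congrFun h (span F {![1, 1, 0, 0]})
  simp only [projAct_span_singleton, coe_symCubeGL_scaledDiag] at hspan
  obtain ⟨k, hk⟩ := Submodule.mem_span_singleton.1
    (hspan ▸ Submodule.mem_span_singleton_self _)
  obtain rfl : k = 1 := by
    simpa [Matrix.vecMul, dotProduct, Fin.sum_univ_four] using congrFun hk 0
  simpa [Matrix.vecMul, dotProduct, Fin.sum_univ_four, Units.ext_iff, eq_comm] using congrFun hk 1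

lemma lineAtZero_smul_eq_self_iff {r : F} (hr : r ≠ 0) {M : GL (Fin 2) F} :
    lineAtZero 0 r <• M = lineAtZero 0 r ↔ ∃ a d : Fˣ, (d = 1 ∨ d = -1) ∧ M = scaledDiag a d := by
  rw [lineAtZero_smul_eq_iff (by simpa using hr)]
  constructor
  · rintro ⟨h10, h01, hsq⟩
    obtain ⟨hM00, hM11⟩ := diagonal_ne_zero_of_upperTriangular h10
    rw [mul_zero] at h01
    have hsq' : M 1 1 ^ 2 = M 0 0 ^ 2 :=
      mul_left_cancel₀ hr (by linear_combination hsq - M 0 1 * h01)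
    refine ⟨.mk0 _ hM00, .mk0 _ (div_ne_zero hM11 hM00), ?_, ?_⟩
    · simpa [Units.ext_iff, div_eq_iff hM00] using sq_eq_sq_iff_eq_or_eq_neg.1 hsq'
    · ext i j
      fin_cases i <;> fin_cases j <;> simp [scaledDiag, h10, h01, mul_div_cancel₀ _ hM00]
  · rintro ⟨a, d, rfl | rfl, rfl⟩ <;> simp [scaledDiag, mul_comm]

lemma lineStab_lineAtZero (hF : 5 ≤ ENat.card F) {r : F} (hr : r ≠ 0) :
    lineStab F (lineAtZero 0 r) =
      (fun d : Fˣ => projAct F (symCubeGL (scaledDiag 1 d))) '' {1, -1} := by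
  ext f
  rw [lineStab, Gq_eq_range hF]
  constructor
  · rintro ⟨⟨M, rfl⟩, hM⟩
    obtain ⟨a, d, hd, rfl⟩ := (lineAtZero_smul_eq_self_iff hr).1 hM
    exact ⟨d, hd, (projAct_symCubeGL_scaledDiag a d).symm⟩
  · rintro ⟨d, hd, rfl⟩
    exact ⟨⟨_, rfl⟩, (lineAtZero_smul_eq_self_iff hr).2 ⟨1, d, hd, rfl⟩⟩

lemma val_eq_one_or_neg_one_iff {d : Fˣ} :
    (d : F) = 1 ∨ (d : F) = -1 ↔ d ∈ ({1, -1} : Set Fˣ) := by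
  simp only [Set.mem_insert_iff, Set.mem_singleton_iff, ← Units.val_inj, Units.val_one,
    Units.val_neg]

lemma image_projAct_scaledDiag_eq_setOf :
    (fun d : Fˣ => projAct F (symCubeGL (scaledDiag 1 d))) '' {1, -1} =
      {f | ∃ d : F, (d = 1 ∨ d = -1) ∧ ∃ A : GL (Fin 4) F,
        (↑A : Matrix (Fin 4) (Fin 4) F) =
          !![1, 0, 0, 0; 0, d, 0, 0; 0, 0, d ^ 2, 0; 0, 0, 0, d ^ 3] ∧
        f = projAct F A} := by
  ext f
  constructor
  · rintro ⟨d, hd, rfl⟩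
    refine ⟨d, val_eq_one_or_neg_one_iff.2 hd, _, ?_, rfl⟩
    rw [coe_symCubeGL_scaledDiag, Units.val_one, one_pow, one_smul]
  · rintro ⟨d, hd, A, hA, rfl⟩
    obtain ⟨u, rfl⟩ : IsUnit d := by rcases hd with rfl | rfl <;> simp
    refine ⟨u, val_eq_one_or_neg_one_iff.1 hd, congrArg (projAct F) (Units.ext ?_)⟩
    rw [hA, coe_symCubeGL_scaledDiag, Units.val_one, one_pow, one_smul]

lemma ncard_units_one_neg_one (h2 : (2 : F) ≠ 0) : ({1, -1} : Set Fˣ).ncard = 2 := by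
  refine Set.ncard_pair fun h => h2 ?_
  have h' : (1 : F) = -1 := congrArg Units.val h
  linear_combination h'

lemma ncard_lineStab_lineAtZero (hF : 5 ≤ ENat.card F) (h2 : (2 : F) ≠ 0) {r : F} (hr : r ≠ 0) :
    (lineStab F (lineAtZero 0 r)).ncard = 2 := by
  rw [lineStab_lineAtZero hF hr,
    Set.ncard_image_of_injective _ projAct_symCubeGL_scaledDiag_injective,
    ncard_units_one_neg_one h2]

end Stabilizer

section Counting

variable {F : Type} [Field F] [Fintype F]

lemma card_stabilizer_lineAtZero (h2 : (2 : F) ≠ 0) {r : F} (hr : r ≠ 0) :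
    Nat.card (MulAction.stabilizer (GL (Fin 2) F)ᵐᵒᵖ (lineAtZero 0 r)) =
      2 * (Fintype.card F - 1) := by
  have himage : (MulAction.stabilizer (GL (Fin 2) F)ᵐᵒᵖ (lineAtZero 0 r) : Set _) =
      (fun x : Fˣ × Fˣ => MulOpposite.op (scaledDiag x.1 x.2)) '' (Set.univ ×ˢ {1, -1}) := by
    ext M
    obtain ⟨M, rfl⟩ := MulOpposite.op_surjective M
    rw [SetLike.mem_coe, MulAction.mem_stabilizer_iff, lineAtZero_smul_eq_self_iff hr]
    simp [eq_comm]
  have hcard := Set.ncard_image_of_injective (Set.univ ×ˢ {1, -1})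
    (MulOpposite.op_injective.comp (scaledDiag_injective (F := F)))
  rw [← SetLike.coe_sort_coe, Nat.card_coe_set_eq, himage]
  refine hcard.trans ?_
  rw [Set.ncard_prod, Set.ncard_univ, ncard_units_one_neg_one h2, Nat.card_units,
    Nat.card_eq_fintype_card, mul_comm]

lemma ncard_orbit_lineAtZero (h2 : (2 : F) ≠ 0) {r : F} (hr : r ≠ 0) :
    (MulAction.orbit (GL (Fin 2) F)ᵐᵒᵖ (lineAtZero 0 r)).ncard =
      (Fintype.card F ^ 3 - Fintype.card F) / 2 := by
  have hstab := (MulAction.stabilizer (GL (Fin 2) F)ᵐᵒᵖ (lineAtZero 0 r)).card_mul_index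
  rw [card_stabilizer_lineAtZero h2 hr, MulAction.index_stabilizer,
    Nat.card_congr MulOpposite.opEquiv.symm, Matrix.card_GL_field] at hstab
  set q := Fintype.card F
  have hgroup : ∏ i : Fin 2, (q ^ 2 - q ^ (i : ℕ)) = (q - 1) * (q ^ 3 - q) := by
    rw [Fin.prod_univ_two, Fin.val_zero, Fin.val_one, pow_zero, pow_one,
      show q ^ 2 - q = q * (q - 1) by rw [Nat.mul_sub, mul_one, sq],
      show q ^ 3 - q = q * (q ^ 2 - 1) by rw [Nat.mul_sub, mul_one, ← pow_succ']]
    ring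
  rw [hgroup, mul_comm 2, mul_assoc] at hstab
  have horbit := Nat.eq_of_mul_eq_mul_left (Nat.sub_pos_of_lt Fintype.one_lt_card) hstab
  omega

end Counting

section SquareClasses

variable {F : Type} [Field F] [Finite F]

lemma exists_eq_sq_or_eq_mul_sq {ρ : F} (hρ : ¬ IsSquare ρ) {r : F} (hr : r ≠ 0) :
    ∃ e : F, r = 1 * e ^ 2 ∨ r = ρ * e ^ 2 := by
  classical
  have := Fintype.ofFinite F
  have hρ0 : ρ ≠ 0 := by
    rintro rfl
    exact hρ IsSquare.zero
  by_cases hsq : IsSquare r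
  · obtain ⟨e, he⟩ := hsq
    exact ⟨e, Or.inl (by rw [he]; ring)⟩
  · have hprod : IsSquare (r * ρ) := by
      rw [← quadraticChar_one_iff_isSquare (mul_ne_zero hr hρ0), map_mul,
        quadraticChar_neg_one_iff_not_isSquare.2 hsq, quadraticChar_neg_one_iff_not_isSquare.2 hρ]
      rfl
    obtain ⟨e, he⟩ := hprod
    refine ⟨e / ρ, Or.inr ?_⟩
    field_simp
    rw [he, sq]

lemma setOf_isUnGamma_eq_union_orbits {ρ : F} (hρ : ¬ IsSquare ρ) :
    {ℓ | isUnGamma F ℓ} = MulAction.orbit (GL (Fin 2) F)ᵐᵒᵖ (lineAtZero 0 1) ∪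
      MulAction.orbit (GL (Fin 2) F)ᵐᵒᵖ (lineAtZero 0 ρ) := by
  ext ℓ
  refine isUnGamma_iff_mem_orbit.trans ⟨?_, ?_⟩
  · rintro ⟨r, hr, hℓ⟩
    obtain ⟨e, he | he⟩ := exists_eq_sq_or_eq_mul_sq hρ hr
    · exact Or.inl ((orbit_lineAtZero_eq_iff hr).2 ⟨e, he⟩ ▸ hℓ)
    · exact Or.inr ((orbit_lineAtZero_eq_iff hr).2 ⟨e, he⟩ ▸ hℓ)
  · rintro (hℓ | hℓ)
    · exact ⟨1, one_ne_zero, hℓ⟩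
    · exact ⟨ρ, fun h => hρ (h ▸ IsSquare.zero), hℓ⟩

end SquareClasses

theorem stmt_15 (q : ℕ) (F : Type) [Field F] [Fintype F]
    (hcard : Fintype.card F = q) (hq : 5 ≤ q) (hodd : Odd q)
    (ρ : F) (hρ : ¬ ∃ s : F, s ^ 2 = ρ) :
    {ℓ : Submodule F (Fin 4 → F) | isUnGamma F ℓ} = lineOrbit F (Submodule.span F ({![0, 0, 0, 1], ![1, 0, 1, 0]} : Set (Fin 4 → F))) ∪ lineOrbit F (Submodule.span F ({![0, 0, 0, 1], ![1, 0, ρ, 0]} : Set (Fin 4 → F))) ∧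
    lineOrbit F (Submodule.span F ({![0, 0, 0, 1], ![1, 0, 1, 0]} : Set (Fin 4 → F))) ≠ lineOrbit F (Submodule.span F ({![0, 0, 0, 1], ![1, 0, ρ, 0]} : Set (Fin 4 → F))) ∧
    (lineOrbit F (Submodule.span F ({![0, 0, 0, 1], ![1, 0, 1, 0]} : Set (Fin 4 → F)))).ncard = (q ^ 3 - q) / 2 ∧
    (lineOrbit F (Submodule.span F ({![0, 0, 0, 1], ![1, 0, ρ, 0]} : Set (Fin 4 → F)))).ncard = (q ^ 3 - q) / 2 ∧
    lineStab F (Submodule.span F ({![0, 0, 0, 1], ![1, 0, 1, 0]} : Set (Fin 4 → F))) = lineStab F (Submodule.span F ({![0, 0, 0, 1], ![1, 0, ρ, 0]} : Set (Fin 4 → F))) ∧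
    lineStab F (Submodule.span F ({![0, 0, 0, 1], ![1, 0, 1, 0]} : Set (Fin 4 → F))) =
      {f | ∃ d : F, (d = 1 ∨ d = -1) ∧ ∃ A : GL (Fin 4) F,
        (↑A : Matrix (Fin 4) (Fin 4) F) =
          !![1, 0, 0, 0; 0, d, 0, 0; 0, 0, d ^ 2, 0; 0, 0, 0, d ^ 3] ∧
        f = projAct F A} ∧
    (lineStab F (Submodule.span F ({![0, 0, 0, 1], ![1, 0, 1, 0]} : Set (Fin 4 → F)))).ncard = 2 := by
  subst hcard
  have hF : 5 ≤ ENat.card F := by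
    rw [ENat.card_eq_coe_fintype_card]
    exact_mod_cast hq
  have h2 : (2 : F) ≠ 0 := Ring.two_ne_zero fun hchar =>
    Nat.not_even_iff_odd.2 hodd (Nat.even_iff.2 (FiniteField.even_card_iff_char_two.1 hchar))
  have hsq : ¬ IsSquare ρ := fun h => hρ ((isSquare_iff_exists_sq ρ).1 h |>.imp fun _ => Eq.symm)
  have hρ0 : ρ ≠ 0 := fun h => hsq (h ▸ IsSquare.zero)
  have hstab (r : F) (hr : r ≠ 0) :=
    (lineStab_lineAtZero hF hr).trans image_projAct_scaledDiag_eq_setOf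
  have hline (r : F) : span F {![0, 0, 0, 1], ![1, 0, r, 0]} = lineAtZero 0 r := rfl
  simp only [hline, lineOrbit_eq_orbit hF]
  refine ⟨setOf_isUnGamma_eq_union_orbits hsq, fun h => ?_, ncard_orbit_lineAtZero h2 one_ne_zero,
    ncard_orbit_lineAtZero h2 hρ0, (hstab 1 one_ne_zero).trans (hstab ρ hρ0).symm,
    hstab 1 one_ne_zero, ncard_lineStab_lineAtZero hF h2 one_ne_zero⟩
  obtain ⟨e, he⟩ := (orbit_lineAtZero_eq_iff hρ0).1 h.symm
  exact hρ ⟨e, by rw [he, one_mul]⟩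
end
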